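/- Let 1<p<∞ with conjugate p' ≤ p, and let 0 < α < n/p'. If additionally α > n/p fails to hold, assume instead p > n/α so that H^α_p ⊂ L_∞. Then ‖φψ‖_{H^α_{p'}} ≤ C‖φ‖_{H^α_p}‖ψ‖_{H^α_{p'}} for all φ, ψ ∈ C_c^∞(ℝⁿ), provided p > n/α. -/

import Mathlib

open MeasureTheory FourierTransform Real Metric Complex
open scoped ENNReal Topology

noncomputable section

/-- Euclidean space ℝⁿ. -/
abbrev Euc (n : ℕ) := EuclideanSpace ℝ (Fin n)

/-- A test function: infinitely differentiable with compact support (`φ ∈ C_c^∞(ℝⁿ)`). -/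
def IsTest {n : ℕ} (φ : Euc n → ℂ) : Prop :=
  ContDiff ℝ (⊤ : ℕ∞) φ ∧ HasCompactSupport φ

/-- The Bessel potential `(1-Δ)^{α/2} f`, realized via the Fourier transform:
`𝓕⁻¹ ((1+|ξ|²)^{α/2} 𝓕 f)`. -/
def besselPotential (n : ℕ) (α : ℝ) (f : Euc n → ℂ) : Euc n → ℂ :=
  𝓕⁻ (fun ξ : Euc n => (((1 + ‖ξ‖ ^ 2) ^ (α / 2) : ℝ) : ℂ) * 𝓕 f ξ)

/-- The Bessel-potential Sobolev norm `‖f‖_{H^α_p} = ‖(1-Δ)^{α/2} f‖_{L_p}`,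
with `p ∈ [1,∞]` an extended real exponent. -/
def HNormE (n : ℕ) (α : ℝ) (p : ℝ≥0∞) (f : Euc n → ℂ) : ℝ :=
  (eLpNorm (besselPotential n α f) p volume).toReal

/-- The Bessel-potential Sobolev norm, for a real exponent `p`. -/
def HNorm (n : ℕ) (α p : ℝ) (f : Euc n → ℂ) : ℝ :=
  HNormE n α (ENNReal.ofReal p) f

/-- Membership of a function in `H^α_p`. -/
def MemH (n : ℕ) (α p : ℝ) (f : Euc n → ℂ) : Prop :=
  eLpNorm (besselPotential n α f) (ENNReal.ofReal p) volume < ⊤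

/-- The Hölder conjugate exponent `p' = p/(p-1)` (as a real number, for `1 < p < ∞`). -/
def conjExp (p : ℝ) : ℝ := p / (p - 1)

/-- The Hölder conjugate exponent as an extended real exponent (`1' = ∞`). -/
def conjExpE (p : ℝ) : ℝ≥0∞ := if p ≤ 1 then ∞ else ENNReal.ofReal (p / (p - 1))

/-- Distributions, modelled as functionals on functions on ℝⁿ;
they are only ever applied to (products of) test functions. -/
def Distr (n : ℕ) := (Euc n → ℂ) → ℂ

/-- The product of a function and a distribution: `(φμ)(ψ) = μ(φψ)`. -/
def distMul {n : ℕ} (φ : Euc n → ℂ) (μ : Distr n) : Distr n :=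
  fun ψ => μ (fun x => φ x * ψ x)

/-- `μ` lies in `H^{-γ}_r` with constant `C`: `|⟨μ, ψ⟩| ≤ C‖ψ‖_{H^γ_{r'}}` for all test
functions `ψ` (`C_c^∞` being dense in `H^γ_{r'}`, this realizes the dual norm). -/
def NegBound (n : ℕ) (γ r : ℝ) (μ : Distr n) (C : ℝ) : Prop :=
  0 ≤ C ∧ ∀ ψ : Euc n → ℂ, IsTest ψ → ‖μ ψ‖ ≤ C * HNormE n γ (conjExpE r) ψ

/-- Membership `μ ∈ H^{-γ}_r` for a distribution `μ`. -/
def MemNeg (n : ℕ) (γ r : ℝ) (μ : Distr n) : Prop := ∃ C, NegBound n γ r μ C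

/-- The norm `‖μ‖_{H^{-γ}_r}`, as the best constant. -/
def negNorm (n : ℕ) (γ r : ℝ) (μ : Distr n) : ℝ := sInf {C | NegBound n γ r μ C}

/-- `μ ∈ H^{-γ}_{r,loc}`: every localization `φμ` by a test function lies in `H^{-γ}_r`. -/
def MemNegLoc (n : ℕ) (γ r : ℝ) (μ : Distr n) : Prop :=
  ∀ φ : Euc n → ℂ, IsTest φ → MemNeg n γ r (distMul φ μ)

/-- `μ` is a multiplier from `H^α_p` to `H^{-α}_p` with constant `C`:
`‖μφ‖_{H^{-α}_p} ≤ C ‖φ‖_{H^α_p}` for all test functions `φ`. -/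
def MulBound (n : ℕ) (α p : ℝ) (μ : Distr n) (C : ℝ) : Prop :=
  0 ≤ C ∧ ∀ φ : Euc n → ℂ, IsTest φ → negNorm n α p (distMul φ μ) ≤ C * HNorm n α p φ

/-- `μ ∈ M[H^α_p → H^{-α}_p]`. -/
def IsMultiplier (n : ℕ) (α p : ℝ) (μ : Distr n) : Prop :=
  MemNegLoc n α p μ ∧ ∃ C, MulBound n α p μ C

/-- The multiplier norm `‖μ‖_{M^α_p}`. -/
def mulNorm (n : ℕ) (α p : ℝ) (μ : Distr n) : ℝ := sInf {C | MulBound n α p μ C}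

/-- A fixed admissible cutoff: smooth, compactly supported, nonnegative, `≡ 1` on the
unit ball. -/
def IsCutoff {n : ℕ} (η : Euc n → ℝ) : Prop :=
  ContDiff ℝ (⊤ : ℕ∞) η ∧ HasCompactSupport η ∧ (∀ x, 0 ≤ η x) ∧
    ∀ x ∈ closedBall (0 : Euc n) 1, η x = 1

/-- The translated cutoff `η(· − z)`, as a complex-valued function. -/
def shiftCutoff {n : ℕ} (η : Euc n → ℝ) (z : Euc n) : Euc n → ℂ :=
  fun x => ((η (x - z) : ℝ) : ℂ)

/-- `u ∈ H^α_{p,unif}` (with respect to the cutoff `η`). -/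
def MemHUnif (n : ℕ) (η : Euc n → ℝ) (α p : ℝ) (u : Euc n → ℂ) : Prop :=
  BddAbove (Set.range fun z : Euc n => HNorm n α p (fun x => shiftCutoff η z x * u x))

/-- The norm `‖u‖_{α,p,unif} = sup_z ‖η(·-z)u‖_{H^α_p}`. -/
def unifNorm (n : ℕ) (η : Euc n → ℝ) (α p : ℝ) (u : Euc n → ℂ) : ℝ :=
  ⨆ z : Euc n, HNorm n α p (fun x => shiftCutoff η z x * u x)

/-- `μ ∈ H^{-γ}_{r,unif}` (for a distribution `μ`). -/
def MemNegUnif (n : ℕ) (η : Euc n → ℝ) (γ r : ℝ) (μ : Distr n) : Prop :=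
  (∀ z : Euc n, MemNeg n γ r (distMul (shiftCutoff η z) μ)) ∧
    BddAbove (Set.range fun z : Euc n => negNorm n γ r (distMul (shiftCutoff η z) μ))

/-- The norm `‖μ‖_{-γ,r,unif} = sup_z ‖η(·-z)μ‖_{H^{-γ}_r}`. -/
def negUnifNorm (n : ℕ) (η : Euc n → ℝ) (γ r : ℝ) (μ : Distr n) : ℝ :=
  ⨆ z : Euc n, negNorm n γ r (distMul (shiftCutoff η z) μ)

/-- Polking's nonlinear operator
`D^η_{ρ,q} u(x) = [∫_0^∞ (∫_{B₁} |u(x+ξy)-u(x)|^ρ dy)^{q/ρ} ξ^{-1-ηq} dξ]^{1/q}`. -/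
def Dop (n : ℕ) (η ρ q : ℝ) (u : Euc n → ℂ) (x : Euc n) : ℝ :=
  (∫ ξ in Set.Ioi (0 : ℝ),
      (∫ y in ball (0 : Euc n) 1, ‖u (x + ξ • y) - u x‖ ^ ρ) ^ (q / ρ) *
        ξ ^ (-1 - η * q)) ^ (1 / q)

/-- The `i`-th standard basis vector of ℝⁿ. -/
def eucBasis (n : ℕ) (i : Fin n) : Euc n := EuclideanSpace.single i 1

/-- The negative Laplacian `-Δ f = -∑ ∂²f/∂x_i²`. -/
def negLap {n : ℕ} (f : Euc n → ℂ) : Euc n → ℂ := fun x =>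
  -∑ i : Fin n, fderiv ℝ (fun y => fderiv ℝ f y (eucBasis n i)) x (eucBasis n i)

/-- The polyharmonic operator `(-Δ)^m`. -/
def polyharmonic (n m : ℕ) (f : Euc n → ℂ) : Euc n → ℂ := negLap^[m] f

/-- The Schrödinger-type operator `L u = (-Δ)^m u + q·u`, viewed as a distribution when
applied to a (test) function `u`. -/
def schrodingerOp (n m : ℕ) (q : Distr n) (u : Euc n → ℂ) : Distr n :=
  fun ψ => (∫ x : Euc n, polyharmonic n m u x * ψ x) + q (fun x => u x * ψ x)

/-- Boundedness of `L = (-Δ)^m + q` from `H^m_p` to `H^{-m}_p`: defined first on test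
functions (and then extended by density). -/
def LBounded (n m : ℕ) (p : ℝ) (q : Distr n) : Prop :=
  ∃ C, 0 ≤ C ∧ ∀ u : Euc n → ℂ, IsTest u →
    MemNeg n m p (schrodingerOp n m q u) ∧
      negNorm n m p (schrodingerOp n m q u) ≤ C * HNorm n m p u

end



/-- Weighted Jensen inequality for lower Lebesgue integrals. -/
lemma pe_jensen {W : Type*} [MeasurableSpace W] (μ : Measure W) {q : ℝ} (hq : 1 ≤ q)
    {K f : W → ℝ≥0∞} (hK : Measurable K) (hf : Measurable f) :
    (∫⁻ w, K w * f w ∂μ) ^ q ≤ (∫⁻ w, K w ∂μ) ^ (q - 1) * ∫⁻ w, K w * f w ^ q ∂μ := by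
  rcases hq.eq_or_lt with rfl | hq1
  · simp
  have hq0 : 0 < q := by linarith
  have hc : q.HolderConjugate (q / (q - 1)) := Real.HolderConjugate.conjExponent hq1
  have h := ENNReal.lintegral_mul_le_Lp_mul_Lq μ hc
    (f := fun w => K w ^ (1 / q) * f w) (g := fun w => K w ^ ((q - 1) / q))
    ((hK.pow_const _).mul hf).aemeasurable (hK.pow_const _).aemeasurable
  have e1 : ∫⁻ w, ((fun w => K w ^ (1 / q) * f w) * fun w => K w ^ ((q - 1) / q)) w ∂μ
      = ∫⁻ w, K w * f w ∂μ := by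
    refine lintegral_congr fun w => ?_
    have : K w = K w ^ (1 / q) * K w ^ ((q - 1) / q) := by
      rw [← ENNReal.rpow_add_of_nonneg _ _ (by positivity) (div_nonneg (by linarith) hq0.le)]
      rw [show 1 / q + (q - 1) / q = 1 by field_simp; ring, ENNReal.rpow_one]
    simp only [Pi.mul_apply]
    conv_rhs => rw [this]
    ring
  have e2 : ∀ w, (K w ^ (1 / q) * f w) ^ q = K w * f w ^ q := fun w => by
    rw [ENNReal.mul_rpow_of_nonneg _ _ hq0.le, ← ENNReal.rpow_mul,
      one_div_mul_cancel hq0.ne', ENNReal.rpow_one]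
  have e3 : ∀ w, (K w ^ ((q - 1) / q)) ^ (q / (q - 1)) = K w := fun w => by
    rw [← ENNReal.rpow_mul, div_mul_div_cancel₀ hq0.ne', div_self (by linarith), ENNReal.rpow_one]
  rw [e1] at h
  simp only [e2, e3] at h
  calc (∫⁻ w, K w * f w ∂μ) ^ q ≤ _ := ENNReal.rpow_le_rpow h hq0.le
    _ = _ := by
      rw [ENNReal.mul_rpow_of_nonneg _ _ hq0.le, ← ENNReal.rpow_mul, ← ENNReal.rpow_mul,
        one_div_mul_cancel hq0.ne', ENNReal.rpow_one, mul_comm]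
      congr 2
      field_simp

/-- Minkowski integral inequality with a majorant. -/
lemma pe_mink {X W : Type*} [MeasurableSpace X] [MeasurableSpace W] (ν : Measure X) (μ : Measure W)
    [SFinite ν] [SFinite μ] {q : ℝ} (hq : 1 ≤ q)
    {F : X → W → ℝ≥0∞} (hF : Measurable (Function.uncurry F))
    {g : W → ℝ≥0∞} (hg : Measurable g) (hgt : ∀ w, g w ≠ ⊤) (hg0 : ∀ x w, g w = 0 → F x w = 0)
    (hb : ∀ w, ∫⁻ x, F x w ^ q ∂ν ≤ g w ^ q) :
    ∫⁻ x, (∫⁻ w, F x w ∂μ) ^ q ∂ν ≤ (∫⁻ w, g w ∂μ) ^ q := by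
  have hq0 : 0 < q := by linarith
  have key : ∀ w, g w * ∫⁻ x, (F x w / g w) ^ q ∂ν ≤ g w := by
    intro w
    by_cases h0 : g w = 0
    · simp [h0]
    calc g w * ∫⁻ x, (F x w / g w) ^ q ∂ν
        = g w * ∫⁻ x, (F x w) ^ q * ((g w)⁻¹) ^ q ∂ν := by
          simp only [div_eq_mul_inv, ENNReal.mul_rpow_of_nonneg _ _ hq0.le]
      _ = g w * ((∫⁻ x, (F x w) ^ q ∂ν) * ((g w)⁻¹) ^ q) := by
          rw [lintegral_mul_const]
          exact (hF.comp (measurable_id.prodMk measurable_const)).pow_const _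
      _ ≤ g w * (g w ^ q * ((g w)⁻¹) ^ q) := by gcongr; exact hb w
      _ = g w := by
          rw [← ENNReal.mul_rpow_of_nonneg _ _ hq0.le, ENNReal.mul_inv_cancel h0 (hgt w)]
          simp
  have e1 : ∀ x w, g w * (F x w / g w) = F x w := fun x w => by
    by_cases h0 : g w = 0
    · simp [h0, hg0 x w h0]
    · exact ENNReal.mul_div_cancel h0 (hgt w)
  have hFm : Measurable (fun z : X × W => F z.1 z.2 / g z.2) :=
    hF.div (hg.comp measurable_snd)
  calc ∫⁻ x, (∫⁻ w, F x w ∂μ) ^ q ∂ν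
      = ∫⁻ x, (∫⁻ w, g w * (F x w / g w) ∂μ) ^ q ∂ν := by simp only [e1]
    _ ≤ ∫⁻ x, (∫⁻ w, g w ∂μ) ^ (q - 1) * ∫⁻ w, g w * (F x w / g w) ^ q ∂μ ∂ν := by
        refine lintegral_mono fun x => pe_jensen μ hq hg ?_
        exact hFm.comp (measurable_const.prodMk measurable_id)
    _ = (∫⁻ w, g w ∂μ) ^ (q - 1) * ∫⁻ x, ∫⁻ w, g w * (F x w / g w) ^ q ∂μ ∂ν := by
        rw [lintegral_const_mul]
        refine Measurable.lintegral_prod_right' (f := fun z : X × W => g z.2 * (F z.1 z.2 / g z.2) ^ q) ?_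
        exact (hg.comp measurable_snd).mul (hFm.pow_const _)
    _ = (∫⁻ w, g w ∂μ) ^ (q - 1) * ∫⁻ w, ∫⁻ x, g w * (F x w / g w) ^ q ∂ν ∂μ := by
        rw [lintegral_lintegral_swap]
        exact ((hg.comp measurable_snd).mul (hFm.pow_const _)).aemeasurable
    _ ≤ (∫⁻ w, g w ∂μ) ^ (q - 1) * ∫⁻ w, g w ∂μ := by
        gcongr with w
        rw [lintegral_const_mul]
        · exact key w
        · exact (hFm.comp (measurable_id.prodMk measurable_const)).pow_const _
    _ = _ := by
        nth_rewrite 2 [← ENNReal.rpow_one (∫⁻ w, g w ∂μ)]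
        rw [← ENNReal.rpow_add_of_nonneg _ _ (by linarith) (by norm_num)]
        congr 1; ring

section young
variable {n : ℕ}

/-- convolution of nonnegative functions -/
noncomputable def peConv (K f : Euc n → ℝ≥0∞) (x : Euc n) : ℝ≥0∞ := ∫⁻ v, K v * f (x - v)

lemma peConv_meas {K f : Euc n → ℝ≥0∞} (hK : Measurable K) (hf : Measurable f) :
    Measurable (fun z : Euc n × Euc n => K z.2 * f (z.1 - z.2)) :=
  (hK.comp measurable_snd).mul (hf.comp (measurable_fst.sub measurable_snd))

lemma peConv_swap_int {K f : Euc n → ℝ≥0∞} (hK : Measurable K) (hf : Measurable f) :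
    ∫⁻ x, ∫⁻ v, K v * f (x - v) = (∫⁻ v, K v) * ∫⁻ v, f v := by
  rw [lintegral_lintegral_swap (peConv_meas hK hf).aemeasurable]
  rw [← lintegral_mul_const _ hK]
  refine lintegral_congr fun v => ?_
  rw [lintegral_const_mul _ (by fun_prop)]
  rw [lintegral_sub_right_eq_self (fun x => f x) v]

/-- Young: `L¹ * L^q ⊂ L^q`. -/
lemma pe_young1 {q : ℝ} (hq : 1 ≤ q) {K f : Euc n → ℝ≥0∞} (hK : Measurable K) (hf : Measurable f) :
    ∫⁻ x, (peConv K f x) ^ q ≤ (∫⁻ v, K v) ^ q * ∫⁻ v, f v ^ q := by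
  calc ∫⁻ x, (peConv K f x) ^ q
      ≤ ∫⁻ x, (∫⁻ v, K v) ^ (q - 1) * ∫⁻ v, K v * f (x - v) ^ q :=
        lintegral_mono fun x => pe_jensen volume hq hK (by fun_prop)
    _ = (∫⁻ v, K v) ^ (q - 1) * ((∫⁻ v, K v) * ∫⁻ v, f v ^ q) := by
        rw [lintegral_const_mul]
        · rw [peConv_swap_int hK (hf.pow_const q)]
        · exact Measurable.lintegral_prod_right' (peConv_meas hK (hf.pow_const q))
    _ = _ := by
        rw [← mul_assoc]
        congr 1
        nth_rewrite 2 [← ENNReal.rpow_one (∫⁻ v, K v)]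
        rw [← ENNReal.rpow_add_of_nonneg _ _ (by linarith) (by norm_num)]
        congr 1; ring

/-- Young: `L^r * L^r ⊂ L^s`. -/
lemma pe_youngs {p r s : ℝ} (hp : 0 < p) (hr : 0 < r) (hs : 0 < s) (h1 : 1 / s + 2 / p = 1)
    (h2 : 1 / r = 1 / s + 1 / p) {K f : Euc n → ℝ≥0∞} (hK : Measurable K) (hf : Measurable f) :
    ∫⁻ x, (peConv K f x) ^ s ≤ (∫⁻ v, K v ^ r) ^ (s / r) * (∫⁻ v, f v ^ r) ^ (s / r) := by
  have e0 : ∀ a : ℝ≥0∞, a = a ^ (r * (1 / s)) * a ^ (r * (1 / p)) := fun a => by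
    rw [← ENNReal.rpow_add_of_nonneg _ _ (by positivity) (by positivity), ← mul_add, ← h2,
      mul_one_div_cancel hr.ne', ENNReal.rpow_one]
  have hpt : ∀ x, (peConv K f x) ^ s ≤
      (∫⁻ v, K v ^ r * f (x - v) ^ r) * ((∫⁻ v, K v ^ r) ^ (s / p) * (∫⁻ v, f v ^ r) ^ (s / p)) := by
    intro x
    have h := ENNReal.lintegral_prod_norm_pow_le (μ := (volume : Measure (Euc n)))
      (Finset.univ : Finset (Fin 3))
      (f := ![fun v => K v ^ r * f (x - v) ^ r, fun v => K v ^ r, fun v => f (x - v) ^ r])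
      (by
        intro i _
        fin_cases i
        · exact ((hK.pow_const _).mul (Measurable.pow_const (by fun_prop) _)).aemeasurable
        · exact (hK.pow_const _).aemeasurable
        · exact (Measurable.pow_const (by fun_prop) _).aemeasurable)
      (p := ![1 / s, 1 / p, 1 / p])
      (by simp [Fin.sum_univ_three]; rw [← h1]; ring)
      (by
        intro i _
        fin_cases i
        · exact (by positivity : 0 ≤ 1 / s)
        · exact (by positivity : 0 ≤ 1 / p)
        · exact (by positivity : 0 ≤ 1 / p))
    simp only [Fin.prod_univ_three, Matrix.cons_val_zero, Matrix.cons_val_one, Matrix.cons_val] at h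
    have e1 : ∀ v, (K v ^ r * f (x - v) ^ r) ^ (1 / s) * (K v ^ r) ^ (1 / p) *
        (f (x - v) ^ r) ^ (1 / p) = K v * f (x - v) := fun v => by
      rw [ENNReal.mul_rpow_of_nonneg _ _ (by positivity : 0 ≤ 1 / s)]
      simp only [← ENNReal.rpow_mul]
      conv_rhs => rw [e0 (K v), e0 (f (x - v))]
      ring
    simp only [e1] at h
    calc (peConv K f x) ^ s ≤ _ := ENNReal.rpow_le_rpow h hs.le
      _ = _ := by
        rw [lintegral_sub_left_eq_self (fun v => f v ^ r) x]
        rw [ENNReal.mul_rpow_of_nonneg _ _ hs.le, ENNReal.mul_rpow_of_nonneg _ _ hs.le]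
        simp only [← ENNReal.rpow_mul]
        rw [one_div_mul_cancel hs.ne', ENNReal.rpow_one, mul_assoc, one_div_mul_eq_div]
  calc ∫⁻ x, (peConv K f x) ^ s ≤ _ := lintegral_mono hpt
    _ = ((∫⁻ v, K v ^ r) * ∫⁻ v, f v ^ r) *
          ((∫⁻ v, K v ^ r) ^ (s / p) * (∫⁻ v, f v ^ r) ^ (s / p)) := by
        rw [lintegral_mul_const]
        · rw [peConv_swap_int (hK.pow_const r) (hf.pow_const r)]
        · exact Measurable.lintegral_prod_right' (peConv_meas (hK.pow_const r) (hf.pow_const r))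
    _ = _ := by
        have e : ∀ a : ℝ≥0∞, a ^ (s / r) = a * a ^ (s / p) := fun a => by
          nth_rewrite 2 [← ENNReal.rpow_one a]
          rw [← ENNReal.rpow_add_of_nonneg _ _ (by norm_num) (by positivity)]
          congr 1
          rw [div_eq_mul_one_div, h2, mul_add, mul_one_div_cancel hs.ne', mul_one_div]
        rw [e, e]; ring

/-- Hölder: `L^r * L^p ⊂ L^∞`. -/
lemma pe_youngInf {p r : ℝ} (h : r.HolderConjugate p)
    {K f : Euc n → ℝ≥0∞} (hK : Measurable K) (hf : Measurable f) (x : Euc n) :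
    peConv K f x ≤ (∫⁻ v, K v ^ r) ^ (1 / r) * (∫⁻ v, f v ^ p) ^ (1 / p) := by
  have := ENNReal.lintegral_mul_le_Lp_mul_Lq volume h (f := K) (g := fun v => f (x - v))
    hK.aemeasurable (by fun_prop)
  rw [lintegral_sub_left_eq_self (fun v => f v ^ p) x] at this
  exact this

end young


open scoped SchwartzMap in
/-- Bessel potential on Schwartz functions. -/
noncomputable def peJ {n : ℕ} (s : ℝ) : 𝓢(Euc n, ℂ) →L[ℂ] 𝓢(Euc n, ℂ) :=
  SchwartzMap.fourierMultiplierCLM ℂ (fun ξ : Euc n => (((1 + ‖ξ‖ ^ 2) ^ (s / 2) : ℝ) : ℂ))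

section bessel
open scoped SchwartzMap
variable {n : ℕ}

lemma peJ_symb (s : ℝ) :
    Function.HasTemperateGrowth (fun ξ : Euc n => (((1 + ‖ξ‖ ^ 2) ^ (s / 2) : ℝ) : ℂ)) := by
  fun_prop

lemma peJ_coe (s : ℝ) (f : 𝓢(Euc n, ℂ)) : ⇑(peJ s f) = besselPotential n s f := by
  rw [peJ, SchwartzMap.fourierMultiplierCLM_apply, SchwartzMap.fourierInv_coe,
    SchwartzMap.smulLeftCLM_apply (peJ_symb s), SchwartzMap.fourier_coe]
  rfl

lemma peJ_peJ (s t : ℝ) (f : 𝓢(Euc n, ℂ)) : peJ s (peJ t f) = peJ (s + t) f := by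
  simp only [peJ]
  rw [SchwartzMap.fourierMultiplierCLM_fourierMultiplierCLM_apply (peJ_symb s) (peJ_symb t)]
  congr
  ext x
  simp only [Pi.mul_apply]
  norm_cast
  rw [← Real.rpow_add (by positivity)]
  congr 1; ring

lemma peJ_zero (f : 𝓢(Euc n, ℂ)) : peJ 0 f = f := by
  simp [peJ]

/-- gamma density -/
noncomputable def peRho (β t : ℝ) : ℝ := (π ^ (β / 2) / Real.Gamma (β / 2)) * (t ^ (β / 2 - 1) * Real.exp (-(π * t)))

/-- heat kernel -/
noncomputable def peH (n : ℕ) (t : ℝ) (v : Euc n) : ℝ := t ^ (-(n : ℝ) / 2) * Real.exp (-(π / t) * ‖v‖ ^ 2)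

lemma peRho_nonneg {β t : ℝ} (hβ : 0 < β) (ht : 0 < t) : 0 ≤ peRho β t := by
  have := Real.Gamma_pos_of_pos (half_pos hβ)
  unfold peRho; positivity

lemma peH_nonneg {t : ℝ} (ht : 0 < t) (v : Euc n) : 0 ≤ peH n t v := by
  unfold peH; positivity

lemma peRho_int {β lam : ℝ} (hβ : 0 < β) (hl : 0 < lam) :
    ∫ t in Set.Ioi (0 : ℝ), peRho β t * Real.exp (-(π * t) * (lam - 1)) = lam ^ (-β / 2) := by
  have h := Real.integral_rpow_mul_exp_neg_mul_Ioi (half_pos hβ) (r := π * lam) (by positivity)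
  have hG := (Real.Gamma_pos_of_pos (half_pos hβ)).ne'
  have e : ∀ t : ℝ, peRho β t * Real.exp (-(π * t) * (lam - 1)) =
      (π ^ (β / 2) / Real.Gamma (β / 2)) * (t ^ (β / 2 - 1) * Real.exp (-(π * lam * t))) := fun t => by
    unfold peRho
    rw [mul_assoc, mul_assoc, ← Real.exp_add]
    congr 3; ring_nf
  simp only [e]
  rw [integral_const_mul, h, one_div, Real.inv_rpow (by positivity), Real.mul_rpow (by positivity) hl.le]
  rw [neg_div, Real.rpow_neg hl.le]
  have : (π : ℝ) ^ (β / 2) ≠ 0 := by positivity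
  field_simp

lemma peRho_integrable {β : ℝ} (hβ : 0 < β) : IntegrableOn (peRho β) (Set.Ioi 0) := by
  have h := peRho_int hβ one_pos
  simp only [sub_self, mul_zero, Real.exp_zero, mul_one, Real.one_rpow] at h
  by_contra hc
  rw [integral_undef hc] at h
  exact zero_ne_one h

lemma pe_heat (f : 𝓢(Euc n, ℂ)) {t : ℝ} (ht : 0 < t) (x : Euc n) :
    ∫ ξ, cexp (-(π * t : ℝ) * ‖ξ‖ ^ 2 + 2 * π * I * (inner ℝ x ξ : ℝ)) * 𝓕 (f : Euc n → ℂ) ξ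
      = ∫ v, (peH n t v : ℂ) * f (x - v) := by
  have hb : 0 < ((π * t : ℝ) : ℂ).re := by rw [ofReal_re]; positivity
  have J : Integrable (fun w : Euc n ↦ cexp (-(π * t : ℝ) * ‖w‖ ^ 2 + 2 * π * I * (inner ℝ x w : ℝ))) :=
    GaussianFourier.integrable_cexp_neg_mul_sq_norm_add hb _ _
  have h1 := (VectorFourier.integral_fourierIntegral_smul_eq_flip (L := innerₗ (Euc n))
      Real.continuous_fourierChar continuous_inner J (f.integrable (μ := volume))).symm
  have h2 : ∫ ξ, cexp (-(π * t : ℝ) * ‖ξ‖ ^ 2 + 2 * π * I * (inner ℝ x ξ : ℝ)) * 𝓕 (f : Euc n → ℂ) ξ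
      = ∫ w, 𝓕 (fun w : Euc n ↦ cexp (-(π * t : ℝ) * ‖w‖ ^ 2 + 2 * π * I * (inner ℝ x w : ℝ))) w * f w := by
    simpa using! h1
  rw [h2]
  have h3 := integral_sub_left_eq_self (μ := (volume : Measure (Euc n)))
    (fun v => (peH n t v : ℂ) * f (x - v)) x
  rw [← h3]
  congr 1
  ext w
  rw [fourier_gaussian_innerProductSpace' hb]
  congr 1
  · unfold peH
    push_cast
    rw [Complex.ofReal_cpow ht.le]
    have hpi : (π : ℂ) ≠ 0 := by exact_mod_cast Real.pi_ne_zero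
    have htc : (t : ℂ) ≠ 0 := by exact_mod_cast ht.ne'
    congr 1
    · rw [show (π : ℂ) / (π * t) = (t : ℂ)⁻¹ by field_simp]
      rw [Complex.inv_cpow _ _ (by rw [Complex.arg_ofReal_of_nonneg ht.le]; exact Real.pi_pos.ne), ← Complex.cpow_neg]
      congr 1
      simp; ring
    · congr 1
      field_simp
  · simp

lemma peJ_neg_apply {β : ℝ} (hβ : 0 < β) (f : 𝓢(Euc n, ℂ)) (x : Euc n) :
    peJ (-β) f x = ∫ t in Set.Ioi (0 : ℝ), (peRho β t : ℂ) * ∫ v, (peH n t v : ℂ) * f (x - v) := by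
  rw [peJ_coe, besselPotential, Real.fourierInv_eq']
  have hF : Integrable (𝓕 (f : Euc n → ℂ)) := by
    rw [← SchwartzMap.fourier_coe]; exact (𝓕 f).integrable
  have hprod : Integrable (Function.uncurry fun (ξ : Euc n) (t : ℝ) =>
      (peRho β t : ℂ) * (cexp (-(π * t : ℝ) * ‖ξ‖ ^ 2 + 2 * π * I * (inner ℝ x ξ : ℝ)) *
        𝓕 (f : Euc n → ℂ) ξ)) (volume.prod (volume.restrict (Set.Ioi 0))) := by
    have h0 := hF.norm.mul_prod (peRho_integrable hβ).norm
    refine h0.mono' ?_ ?_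
    · have hFc : Continuous (𝓕 (f : Euc n → ℂ)) := by
        rw [← SchwartzMap.fourier_coe]; exact (𝓕 f).continuous
      refine Measurable.aestronglyMeasurable ?_
      refine Measurable.mul ?_ ?_
      · unfold peRho; fun_prop
      · refine Measurable.mul ?_ (hFc.measurable.comp measurable_fst)
        fun_prop
    · have hpos : ∀ᵐ z : Euc n × ℝ ∂(volume.prod (volume.restrict (Set.Ioi (0 : ℝ)))), 0 < z.2 :=
        Measure.quasiMeasurePreserving_snd.ae (ae_restrict_mem measurableSet_Ioi)
      filter_upwards [hpos] with z hz
      simp only [Function.uncurry_def, norm_mul, Complex.norm_exp, Complex.norm_real]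
      have hre : (-((π * z.2 : ℝ) : ℂ) * (‖z.1‖ : ℂ) ^ 2 + 2 * π * I * ((inner ℝ x z.1 : ℝ) : ℂ)).re
          = -(π * z.2 * ‖z.1‖ ^ 2) := by
        rw [show (-((π * z.2 : ℝ) : ℂ) * (‖z.1‖ : ℂ) ^ 2 + 2 * π * I * ((inner ℝ x z.1 : ℝ) : ℂ)) =
          ((-(π * z.2 * ‖z.1‖ ^ 2) : ℝ) : ℂ) + ((2 * π * inner ℝ x z.1 : ℝ) : ℂ) * I by
            push_cast; ring]
        rw [Complex.add_re, Complex.re_ofReal_mul, Complex.I_re, mul_zero, add_zero, Complex.ofReal_re]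
      rw [hre]
      have h1 : Real.exp (-(π * z.2 * ‖z.1‖ ^ 2)) ≤ 1 := by
        rw [Real.exp_le_one_iff]
        have : 0 ≤ π * z.2 * ‖z.1‖ ^ 2 := by positivity
        linarith
      calc ‖peRho β z.2‖ * (Real.exp (-(π * z.2 * ‖z.1‖ ^ 2)) * ‖𝓕 (f : Euc n → ℂ) z.1‖)
          ≤ ‖peRho β z.2‖ * (1 * ‖𝓕 (f : Euc n → ℂ) z.1‖) := by gcongr
        _ = _ := by ring
  have e1 : ∀ ξ : Euc n, cexp ((2 * π * inner ℝ ξ x : ℝ) * I) •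
      ((((1 + ‖ξ‖ ^ 2) ^ (-β / 2) : ℝ) : ℂ) * 𝓕 (f : Euc n → ℂ) ξ)
      = ∫ t in Set.Ioi (0 : ℝ), (peRho β t : ℂ) * (cexp (-(π * t : ℝ) * ‖ξ‖ ^ 2 + 2 * π * I * (inner ℝ x ξ : ℝ)) * 𝓕 (f : Euc n → ℂ) ξ) := by
    intro ξ
    rw [← peRho_int hβ (by positivity : 0 < 1 + ‖ξ‖ ^ 2)]
    rw [← integral_complex_ofReal, ← integral_mul_const, smul_eq_mul, ← integral_const_mul]
    congr 1
    ext t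
    rw [Complex.exp_add, real_inner_comm]
    push_cast
    rw [show (-(π * t) * (1 + (‖ξ‖ : ℂ) ^ 2 - 1)) = -(π * t) * ‖ξ‖ ^ 2 by ring,
      show 2 * (π : ℂ) * (inner ℝ x ξ : ℝ) * I = 2 * π * I * (inner ℝ x ξ : ℝ) by ring]
    ring
  rw [integral_congr_ae (Filter.Eventually.of_forall e1), integral_integral_swap hprod]
  refine setIntegral_congr_fun measurableSet_Ioi fun t ht => ?_
  rw [integral_const_mul, pe_heat f ht]

end bessel


section kern
open scoped SchwartzMap
variable {n : ℕ}

lemma pe_scale {E : Type*} [NormedAddCommGroup E] [NormedSpace ℝ E] [MeasurableSpace E] [BorelSpace E]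
    [FiniteDimensional ℝ E] (μ : Measure E) [μ.IsAddHaarMeasure] (F : E → ℝ≥0∞) {R : ℝ} (hR : 0 < R) :
    ∫⁻ x, F (R • x) ∂μ = ENNReal.ofReal ((R ^ Module.finrank ℝ E)⁻¹) * ∫⁻ x, F x ∂μ := by
  have h := Measure.map_addHaar_smul μ hR.ne'
  have e : MeasurableEmbedding (fun x : E => R • x) := measurableEmbedding_const_smul₀ hR.ne'
  have h2 := e.lintegral_map (μ := μ) F
  rw [← h2, h, lintegral_smul_measure, abs_of_pos (by positivity), smul_eq_mul]

lemma peRho_rpow {β γ : ℝ} (hγ : γ < β) {t : ℝ} (ht : 0 < t) (hβ : 0 < β) :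
    peRho β t * t ^ (-γ / 2) = (π ^ (β / 2) / Real.Gamma (β / 2)) / (π ^ ((β - γ) / 2) / Real.Gamma ((β - γ) / 2)) *
      peRho (β - γ) t := by
  have h1 := Real.Gamma_pos_of_pos (half_pos hβ)
  have h2 := Real.Gamma_pos_of_pos (half_pos (sub_pos.2 hγ))
  unfold peRho
  rw [show (β - γ) / 2 - 1 = (β / 2 - 1) + (-γ / 2) by ring, Real.rpow_add ht]
  have h3 : (0 : ℝ) < π ^ ((β - γ) / 2) := by positivity
  field_simp

lemma peRho_rpow_fin {β γ : ℝ} (hβ : 0 < β) (hγ : γ < β) :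
    ∫⁻ t in Set.Ioi (0 : ℝ), ENNReal.ofReal (peRho β t * t ^ (-γ / 2)) < ⊤ := by
  have h := (peRho_integrable (sub_pos.2 hγ)).const_mul
    ((π ^ (β / 2) / Real.Gamma (β / 2)) / (π ^ ((β - γ) / 2) / Real.Gamma ((β - γ) / 2)))
  have h2 := h.lintegral_lt_top
  refine lt_of_le_of_lt (le_of_eq ?_) h2
  refine setLIntegral_congr_fun measurableSet_Ioi fun t ht => ?_
  simp only [peRho_rpow hγ ht hβ]

lemma pe_gauss_fin {b : ℝ} (hb : 0 < b) : ∫⁻ v : Euc n, ENNReal.ofReal (Real.exp (-b * ‖v‖ ^ 2)) < ⊤ := by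
  have h := GaussianFourier.integrable_cexp_neg_mul_sq_norm_add (V := Euc n) (b := (b : ℂ)) (by simpa using hb) 0 0
  have h2 := h.norm.lintegral_lt_top
  refine lt_of_le_of_lt (le_of_eq ?_) h2
  refine lintegral_congr fun v => ?_
  rw [Complex.norm_exp]
  congr 2
  simp [← Complex.ofReal_pow, ← Complex.ofReal_mul, ← Complex.ofReal_neg]

lemma peRho_meas (β : ℝ) : Measurable (peRho β) := by unfold peRho; fun_prop

lemma peH_meas : Measurable (Function.uncurry (peH n)) := by
  unfold peH Function.uncurry; fun_prop

lemma peH_scale {t : ℝ} (ht : 0 < t) (v : Euc n) :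
    peH n t v = t ^ (-(n : ℝ) / 2) * peH n 1 ((√t)⁻¹ • v) := by
  unfold peH
  rw [Real.one_rpow, one_mul, norm_smul, mul_pow, norm_inv, Real.norm_of_nonneg (Real.sqrt_nonneg _), inv_pow,
    Real.sq_sqrt ht.le]
  congr 2; field_simp

lemma pe_tn {t : ℝ} (ht : 0 < t) : ((√t)⁻¹ ^ n)⁻¹ = t ^ ((n : ℝ) / 2) := by
  rw [inv_pow, inv_inv, Real.sqrt_eq_rpow, ← Real.rpow_mul_natCast ht.le]
  congr 1; ring

/-- L^q scaling for functions of the form `t^{-n/2} F(v/√t)` -/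
lemma pe_scale_t {t : ℝ} (ht : 0 < t) (F : Euc n → ℝ≥0∞) :
    ∫⁻ v, F ((√t)⁻¹ • v) = ENNReal.ofReal (t ^ ((n : ℝ) / 2)) * ∫⁻ v, F v := by
  rw [pe_scale volume F (by positivity : 0 < (√t)⁻¹)]
  rw [finrank_euclideanSpace_fin, pe_tn ht]

lemma pe_phi_lip (w : Euc n) (hw : ‖w‖ ≤ 1) :
    ∫⁻ v, ‖peH n 1 (v + w) - peH n 1 v‖ₑ ≤
      ENNReal.ofReal (100 * ‖w‖) * ∫⁻ v : Euc n, ENNReal.ofReal (Real.exp (-1 * ‖v‖ ^ 2)) := by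
  have hpt : ∀ v : Euc n, ‖peH n 1 (v + w) - peH n 1 v‖ₑ ≤
      ENNReal.ofReal (50 * ‖w‖) * ENNReal.ofReal (Real.exp (-1 * ‖v + w‖ ^ 2)) +
      ENNReal.ofReal (50 * ‖w‖) * ENNReal.ofReal (Real.exp (-1 * ‖v‖ ^ 2)) := by
    intro v
    have key : ∀ a b : ℝ, |Real.exp (-a) - Real.exp (-b)| ≤ |a - b| * (Real.exp (-a) + Real.exp (-b)) := by
      have : ∀ a b : ℝ, a ≤ b → |Real.exp (-a) - Real.exp (-b)| ≤ |a - b| * (Real.exp (-a) + Real.exp (-b)) := by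
        intro a b hab
        have h1 : Real.exp (-b) ≤ Real.exp (-a) := Real.exp_le_exp.2 (by linarith)
        rw [abs_of_nonneg (by linarith), abs_of_nonpos (by linarith)]
        have h2 : Real.exp (-b) = Real.exp (-a) * Real.exp (a - b) := by rw [← Real.exp_add]; congr 1; ring
        have h3 := Real.add_one_le_exp (a - b)
        have h4 := Real.exp_pos (-a)
        have h5 := Real.exp_pos (-b)
        nlinarith
      intro a b
      rcases le_total a b with h | h
      · exact this a b h
      · rw [abs_sub_comm, abs_sub_comm a b, add_comm]; exact this b a h
    have hd : ∀ x : ℝ, 0 ≤ x → (2 * x + 1) * Real.exp (-(π * x ^ 2)) ≤ 3 * Real.exp (-1 * x ^ 2) ∧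
        (2 * x + 3) * Real.exp (-(π * x ^ 2)) ≤ 5 * Real.exp (-1 * x ^ 2) := by
      intro x hx
      have h3 := Real.pi_gt_three
      have h1 : Real.exp (-(π * x ^ 2)) ≤ Real.exp (-1 * x ^ 2) * Real.exp (-(x ^ 2)) := by
        rw [← Real.exp_add, Real.exp_le_exp]; nlinarith [sq_nonneg x]
      have h2 : (1 + x ^ 2) * Real.exp (-(x ^ 2)) ≤ 1 := by
        have := Real.add_one_le_exp (x ^ 2)
        have h5 := Real.exp_pos (-(x ^ 2))
        calc (1 + x ^ 2) * Real.exp (-(x ^ 2)) ≤ Real.exp (x ^ 2) * Real.exp (-(x ^ 2)) := by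
              gcongr; linarith
          _ = 1 := by rw [← Real.exp_add]; simp
      have h6 := Real.exp_pos (-1 * x ^ 2)
      have h7 := Real.exp_pos (-(x ^ 2))
      constructor
      · calc _ ≤ (2 * x + 1) * (Real.exp (-1 * x ^ 2) * Real.exp (-(x ^ 2))) := by gcongr
          _ ≤ (3 * (1 + x ^ 2)) * (Real.exp (-1 * x ^ 2) * Real.exp (-(x ^ 2))) := by
              gcongr; nlinarith [sq_nonneg (x - 1)]
          _ = 3 * ((1 + x ^ 2) * Real.exp (-(x ^ 2))) * Real.exp (-1 * x ^ 2) := by ring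
          _ ≤ 3 * 1 * Real.exp (-1 * x ^ 2) := by gcongr
          _ = _ := by ring
      · calc _ ≤ (2 * x + 3) * (Real.exp (-1 * x ^ 2) * Real.exp (-(x ^ 2))) := by gcongr
          _ ≤ (5 * (1 + x ^ 2)) * (Real.exp (-1 * x ^ 2) * Real.exp (-(x ^ 2))) := by
              gcongr; nlinarith [sq_nonneg (x - 1)]
          _ = 5 * ((1 + x ^ 2) * Real.exp (-(x ^ 2))) * Real.exp (-1 * x ^ 2) := by ring
          _ ≤ 5 * 1 * Real.exp (-1 * x ^ 2) := by gcongr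
          _ = _ := by ring
    have hv := (hd ‖v‖ (norm_nonneg _)).1
    have hvw := (hd ‖v + w‖ (norm_nonneg _)).2
    have hab : |π * ‖v + w‖ ^ 2 - π * ‖v‖ ^ 2| ≤ π * (‖w‖ * (2 * ‖v‖ + 1)) := by
      rw [← mul_sub, abs_mul, abs_of_pos Real.pi_pos]
      gcongr
      rw [sq_sub_sq, abs_mul, mul_comm]
      gcongr
      · have := abs_norm_sub_norm_le (v + w) v
        simpa using this
      · rw [abs_of_nonneg (by positivity)]
        have := norm_add_le v w
        linarith
    have hle : 2 * ‖v‖ + 1 ≤ 2 * ‖v + w‖ + 3 := by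
      have := norm_sub_le (v + w) w
      rw [add_sub_cancel_right] at this
      linarith
    have h10 : |peH n 1 (v + w) - peH n 1 v| ≤ 50 * ‖w‖ * Real.exp (-1 * ‖v + w‖ ^ 2) +
        50 * ‖w‖ * Real.exp (-1 * ‖v‖ ^ 2) := by
      have := key (π * ‖v + w‖ ^ 2) (π * ‖v‖ ^ 2)
      unfold peH
      simp only [Real.one_rpow, one_mul, div_one, neg_mul] at this ⊢
      refine this.trans ?_
      have h4 := Real.pi_lt_four
      simp only [neg_mul, one_mul] at hv hvw
      calc _ ≤ π * (‖w‖ * (2 * ‖v‖ + 1)) * (Real.exp (-(π * ‖v + w‖ ^ 2)) + Real.exp (-(π * ‖v‖ ^ 2))) := by gcongr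
        _ = π * ‖w‖ * ((2 * ‖v‖ + 1) * Real.exp (-(π * ‖v + w‖ ^ 2)) + (2 * ‖v‖ + 1) * Real.exp (-(π * ‖v‖ ^ 2))) := by ring
        _ ≤ π * ‖w‖ * ((2 * ‖v + w‖ + 3) * Real.exp (-(π * ‖v + w‖ ^ 2)) + (2 * ‖v‖ + 1) * Real.exp (-(π * ‖v‖ ^ 2))) := by gcongr
        _ ≤ 4 * ‖w‖ * (5 * Real.exp (-‖v + w‖ ^ 2) + 3 * Real.exp (-‖v‖ ^ 2)) := by gcongr
        _ ≤ _ := by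
          have e1 : 0 ≤ ‖w‖ * Real.exp (-‖v + w‖ ^ 2) := by positivity
          have e2 : 0 ≤ ‖w‖ * Real.exp (-‖v‖ ^ 2) := by positivity
          nlinarith
    rw [← ENNReal.ofReal_mul (by positivity), ← ENNReal.ofReal_mul (by positivity),
      ← ENNReal.ofReal_add (by positivity) (by positivity), Real.enorm_eq_ofReal_abs]
    exact ENNReal.ofReal_le_ofReal h10
  refine (lintegral_mono hpt).trans (le_of_eq ?_)
  rw [lintegral_add_left (by fun_prop), lintegral_const_mul _ (by fun_prop), lintegral_const_mul _ (by fun_prop),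
    lintegral_add_right_eq_self (fun v : Euc n => ENNReal.ofReal (Real.exp (-1 * ‖v‖ ^ 2))) w, ← add_mul,
    ← ENNReal.ofReal_add (by positivity) (by positivity)]
  congr 2; ring

end kern


section kern2
open scoped SchwartzMap NNReal
variable {n : ℕ}

/-- Bessel kernel -/
noncomputable def peG (n : ℕ) (β : ℝ) (v : Euc n) : ℝ≥0∞ :=
  ∫⁻ t in Set.Ioi (0 : ℝ), ‖(peRho β t : ℂ) * (peH n t v : ℂ)‖ₑ

/-- difference of Bessel kernels -/
noncomputable def peD (n : ℕ) (β : ℝ) (u : ℂ) (w : Euc n) (v : Euc n) : ℝ≥0∞ :=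
  ∫⁻ t in Set.Ioi (0 : ℝ), ‖(peRho β t : ℂ) * (u * (peH n t (v + w) : ℂ) - (peH n t v : ℂ))‖ₑ

lemma peH_meas1 : Measurable (fun z : ℝ × Euc n => (peH n z.1 z.2 : ℂ)) :=
  Complex.measurable_ofReal.comp peH_meas

lemma peH_meas2 (u : ℂ) (w : Euc n) :
    Measurable (fun z : ℝ × Euc n => (u * (peH n z.1 (z.2 + w) : ℂ) - (peH n z.1 z.2 : ℂ))) := by
  have h1 : Measurable (fun z : ℝ × Euc n => (peH n z.1 (z.2 + w) : ℂ)) :=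
    peH_meas1.comp (measurable_fst.prodMk (measurable_snd.add_const w))
  exact (h1.const_mul u).sub peH_meas1

lemma pe_ker_meas {β : ℝ} {k : ℝ → Euc n → ℂ} (hk : Measurable (Function.uncurry k)) :
    Measurable (fun z : ℝ × Euc n => ‖(peRho β z.1 : ℂ) * k z.1 z.2‖ₑ) := by
  have h1 : Measurable (fun z : ℝ × Euc n => (peRho β z.1 : ℂ)) :=
    Complex.measurable_ofReal.comp ((peRho_meas β).comp measurable_fst)
  exact (h1.mul hk).enorm

lemma pe_ker_meas' {β : ℝ} {k : ℝ → Euc n → ℂ} (hk : Measurable (Function.uncurry k)) :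
    Measurable (fun v : Euc n => ∫⁻ t in Set.Ioi (0 : ℝ), ‖(peRho β t : ℂ) * k t v‖ₑ) :=
  Measurable.lintegral_prod_left' (pe_ker_meas (β := β) hk)

lemma peG_meas (β : ℝ) : Measurable (peG n β) := pe_ker_meas' (k := fun t v => (peH n t v : ℂ)) peH_meas1

lemma peD_meas (β : ℝ) (u : ℂ) (w : Euc n) : Measurable (peD n β u w) :=
  pe_ker_meas' (k := fun t v => (u * (peH n t (v + w) : ℂ) - (peH n t v : ℂ))) (peH_meas2 u w)

lemma pe_ker_bound0 {β : ℝ} {k : ℝ → Euc n → ℂ} (hk : Measurable (Function.uncurry k))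
    (f : 𝓢(Euc n, ℂ)) (x : Euc n) :
    ∫⁻ t in Set.Ioi (0 : ℝ), ‖(peRho β t : ℂ) * ∫ v, k t v * f (x - v)‖ₑ ≤
      peConv (fun v => ∫⁻ t in Set.Ioi (0 : ℝ), ‖(peRho β t : ℂ) * k t v‖ₑ) (fun y => ‖f y‖ₑ) x := by
  have hf : Measurable (fun y => ‖f y‖ₑ) := f.continuous.measurable.enorm
  calc _ ≤ ∫⁻ t in Set.Ioi (0 : ℝ), ∫⁻ v, ‖(peRho β t : ℂ) * k t v‖ₑ * ‖f (x - v)‖ₑ := by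
        refine lintegral_mono fun t => ?_
        rw [← integral_const_mul]
        refine (enorm_integral_le_lintegral_enorm _).trans (le_of_eq ?_)
        refine lintegral_congr fun v => ?_
        rw [← mul_assoc, enorm_mul]
    _ = ∫⁻ v, ∫⁻ t in Set.Ioi (0 : ℝ), ‖(peRho β t : ℂ) * k t v‖ₑ * ‖f (x - v)‖ₑ := by
        rw [lintegral_lintegral_swap]
        refine Measurable.aemeasurable ?_
        have m1 := pe_ker_meas (β := β) hk
        have m2 : Measurable (fun z : ℝ × Euc n => ‖f (x - z.2)‖ₑ) :=
          hf.comp (measurable_snd.const_sub x)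
        have m3 := m1.mul m2
        simp only [Function.uncurry_def]
        exact m3
    _ = ∫⁻ v, (∫⁻ t in Set.Ioi (0 : ℝ), ‖(peRho β t : ℂ) * k t v‖ₑ) * ‖f (x - v)‖ₑ := by
        refine lintegral_congr fun v => ?_
        rw [lintegral_mul_const]
        have m1 := pe_ker_meas (β := β) hk
        have m2 : Measurable (fun t : ℝ => (t, v)) := measurable_id.prodMk measurable_const
        have m3 := m1.comp m2
        simp only [Function.comp_def] at m3
        exact m3

lemma pe_ker_bound {β : ℝ} {k : ℝ → Euc n → ℂ} (hk : Measurable (Function.uncurry k))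
    (f : 𝓢(Euc n, ℂ)) (x : Euc n) :
    ‖∫ t in Set.Ioi (0 : ℝ), (peRho β t : ℂ) * ∫ v, k t v * f (x - v)‖ₑ ≤
      peConv (fun v => ∫⁻ t in Set.Ioi (0 : ℝ), ‖(peRho β t : ℂ) * k t v‖ₑ) (fun y => ‖f y‖ₑ) x :=
  (enorm_integral_le_lintegral_enorm _).trans (pe_ker_bound0 hk f x)

lemma pe_ker_int {β : ℝ} {k : ℝ → Euc n → ℂ} (hk : Measurable (Function.uncurry k)) :
    ∫⁻ v, ∫⁻ t in Set.Ioi (0 : ℝ), ‖(peRho β t : ℂ) * k t v‖ₑ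
      = ∫⁻ t in Set.Ioi (0 : ℝ), ‖peRho β t‖ₑ * ∫⁻ v, ‖k t v‖ₑ := by
  rw [lintegral_lintegral_swap]
  · refine lintegral_congr fun t => ?_
    rw [← lintegral_const_mul]
    · refine lintegral_congr fun v => ?_
      rw [enorm_mul]
      congr 1
      simp [enorm_eq_nnnorm]
    · exact (hk.comp (measurable_const.prodMk measurable_id)).enorm
  · exact ((pe_ker_meas hk).comp measurable_swap).aemeasurable

/-- master gaussian integral -/
noncomputable def peA (n : ℕ) : ℝ≥0∞ := ∫⁻ v : Euc n, ENNReal.ofReal (Real.exp (-1 * ‖v‖ ^ 2))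

lemma peA_fin : peA n < ⊤ := pe_gauss_fin one_pos

lemma peH1_le : ∫⁻ v : Euc n, ‖peH n 1 v‖ₑ ≤ peA n := by
  refine lintegral_mono fun v => ?_
  simp only
  rw [Real.enorm_eq_ofReal_abs]
  refine ENNReal.ofReal_le_ofReal ?_
  unfold peH
  rw [abs_of_nonneg (by positivity), Real.one_rpow, one_mul, Real.exp_le_exp]
  have := Real.pi_gt_three
  nlinarith [sq_nonneg ‖v‖]

lemma pe_oR {t : ℝ} (ht : 0 < t) : ENNReal.ofReal (t ^ (-(n : ℝ) / 2)) * ENNReal.ofReal (t ^ ((n : ℝ) / 2)) = 1 := by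
  rw [← ENNReal.ofReal_mul (by positivity), ← Real.rpow_add ht]
  simp [neg_div]

lemma peH_int {t : ℝ} (ht : 0 < t) : ∫⁻ v : Euc n, ‖peH n t v‖ₑ ≤ peA n := by
  have e : ∀ v : Euc n, ‖peH n t v‖ₑ = ENNReal.ofReal (t ^ (-(n : ℝ) / 2)) *
      (fun v => ‖peH n 1 v‖ₑ) ((√t)⁻¹ • v) := fun v => by
    rw [peH_scale ht, enorm_mul, Real.enorm_eq_ofReal (by positivity)]
  rw [lintegral_congr e, lintegral_const_mul' _ _ ENNReal.ofReal_ne_top, pe_scale_t ht (fun v => ‖peH n 1 v‖ₑ), ← mul_assoc,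
    pe_oR ht, one_mul]
  exact peH1_le

lemma peDH_int {t : ℝ} (ht : 0 < t) (w : Euc n) :
    ∫⁻ v : Euc n, ‖peH n t (v + w) - peH n t v‖ₑ =
      ∫⁻ v, ‖peH n 1 (v + (√t)⁻¹ • w) - peH n 1 v‖ₑ := by
  have e : ∀ v : Euc n, ‖peH n t (v + w) - peH n t v‖ₑ = ENNReal.ofReal (t ^ (-(n : ℝ) / 2)) *
      (fun v => ‖peH n 1 (v + (√t)⁻¹ • w) - peH n 1 v‖ₑ) ((√t)⁻¹ • v) := fun v => by
    rw [peH_scale ht, peH_scale ht, ← mul_sub, enorm_mul, Real.enorm_eq_ofReal (by positivity), smul_add]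
  rw [lintegral_congr e, lintegral_const_mul' _ _ ENNReal.ofReal_ne_top,
    pe_scale_t ht (fun v => ‖peH n 1 (v + (√t)⁻¹ • w) - peH n 1 v‖ₑ), ← mul_assoc,
    pe_oR ht, one_mul]

lemma pe_phi_two (w : Euc n) : ∫⁻ v, ‖peH n 1 (v + w) - peH n 1 v‖ₑ ≤ 2 * peA n := by
  have hm : Measurable (fun v : Euc n => ‖peH n 1 v‖ₑ) :=
    (peH_meas.comp (measurable_const.prodMk measurable_id)).enorm
  calc _ ≤ ∫⁻ v, (‖peH n 1 (v + w)‖ₑ + ‖peH n 1 v‖ₑ) := lintegral_mono fun v => enorm_sub_le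
    _ = (∫⁻ v, ‖peH n 1 v‖ₑ) + ∫⁻ v, ‖peH n 1 v‖ₑ := by
        rw [lintegral_add_right _ hm, lintegral_add_right_eq_self (fun v => ‖peH n 1 v‖ₑ) w]
    _ ≤ peA n + peA n := by gcongr <;> exact peH1_le
    _ = _ := by ring

lemma pe_phi_hold {σ : ℝ} (hσ : 0 < σ) (hσ1 : σ ≤ 1) (w : Euc n) :
    ∫⁻ v, ‖peH n 1 (v + w) - peH n 1 v‖ₑ ≤ ENNReal.ofReal (100 * ‖w‖ ^ σ) * peA n := by
  rcases le_total ‖w‖ 1 with h | h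
  · refine (pe_phi_lip w h).trans ?_
    change _ * peA n ≤ _
    gcongr
    exact Real.self_le_rpow_of_le_one (norm_nonneg _) h hσ1
  · refine (pe_phi_two w).trans ?_
    gcongr
    refine le_trans (le_of_eq (by simp : (2 : ℝ≥0∞) = ENNReal.ofReal 2)) (ENNReal.ofReal_le_ofReal ?_)
    have := Real.one_le_rpow h hσ.le
    linarith

lemma peD_inner {σ : ℝ} (hσ : 0 < σ) (hσ1 : σ ≤ 1) {t : ℝ} (ht : 0 < t) {u : ℂ} {w : Euc n} {ω : ℝ≥0}
    (hω : ω ≤ 1) (hu : ‖u - 1‖ ≤ 7 * ω) (hw : ω = 1 ∨ ‖w‖ ≤ ω) :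
    ∫⁻ v : Euc n, ‖u * (peH n t (v + w) : ℂ) - (peH n t v : ℂ)‖ₑ ≤
      ENNReal.ofReal (200 * (ω : ℝ) ^ σ * (1 + t ^ (-σ / 2))) * peA n := by
  have hm : Measurable (fun v : Euc n => ‖peH n t v‖ₑ) :=
    (peH_meas.comp (measurable_const.prodMk measurable_id)).enorm
  have h1 : ∫⁻ v : Euc n, ‖u * (peH n t (v + w) : ℂ) - (peH n t v : ℂ)‖ₑ ≤
      ENNReal.ofReal (7 * ω) * peA n + ∫⁻ v : Euc n, ‖peH n t (v + w) - peH n t v‖ₑ := by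
    calc _ ≤ ∫⁻ v, (ENNReal.ofReal (7 * ω) * ‖peH n t (v + w)‖ₑ + ‖peH n t (v + w) - peH n t v‖ₑ) := by
          refine lintegral_mono fun v => ?_
          simp only
          rw [show u * (peH n t (v + w) : ℂ) - (peH n t v : ℂ) = (u - 1) * (peH n t (v + w) : ℂ) +
            ((peH n t (v + w) - peH n t v : ℝ) : ℂ) by push_cast; ring]
          refine (enorm_add_le _ _).trans ?_
          have e : ∀ a : ℝ, ‖(a : ℂ)‖ₑ = ‖a‖ₑ := fun a => by simp [enorm_eq_nnnorm]
          rw [enorm_mul, e, e]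
          gcongr
          rw [← ofReal_norm]
          exact ENNReal.ofReal_le_ofReal hu
      _ = ENNReal.ofReal (7 * ω) * (∫⁻ v, ‖peH n t v‖ₑ) + ∫⁻ v : Euc n, ‖peH n t (v + w) - peH n t v‖ₑ := by
          rw [lintegral_add_left, lintegral_const_mul, lintegral_add_right_eq_self (fun v => ‖peH n t v‖ₑ) w]
          · exact hm.comp (measurable_id.add_const w)
          · exact (hm.comp (measurable_id.add_const w)).const_mul _
      _ ≤ _ := by gcongr; exact peH_int ht
  have hωσ : (ω : ℝ) ≤ (ω : ℝ) ^ σ := Real.self_le_rpow_of_le_one ω.2 (by exact_mod_cast hω) hσ1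
  have hA : ∫⁻ v : Euc n, ‖peH n t (v + w) - peH n t v‖ₑ ≤
      ENNReal.ofReal (100 * (ω : ℝ) ^ σ * (1 + t ^ (-σ / 2))) * peA n := by
    rw [peDH_int ht]
    have ht' : (0 : ℝ) < t ^ (-σ / 2) := by positivity
    rcases hw with rfl | hw
    · refine (pe_phi_two _).trans ?_
      gcongr
      rw [← ENNReal.ofReal_ofNat]
      refine ENNReal.ofReal_le_ofReal ?_
      simp only [NNReal.coe_one, Real.one_rpow]
      linarith
    · refine (pe_phi_hold hσ hσ1 _).trans ?_
      refine mul_le_mul_left (ENNReal.ofReal_le_ofReal ?_) _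
      rw [norm_smul, Real.mul_rpow (by positivity) (by positivity), norm_inv, Real.norm_of_nonneg (Real.sqrt_nonneg _),
        Real.inv_rpow (by positivity), ← Real.rpow_neg (by positivity), Real.sqrt_eq_rpow, ← Real.rpow_mul ht.le]
      rw [show 1 / 2 * -σ = -σ / 2 by ring, mul_assoc, mul_comm (t ^ (-σ / 2))]
      have hwσ : ‖w‖ ^ σ ≤ (ω : ℝ) ^ σ := Real.rpow_le_rpow (norm_nonneg _) hw hσ.le
      have : ‖w‖ ^ σ * t ^ (-σ / 2) ≤ (ω : ℝ) ^ σ * (1 + t ^ (-σ / 2)) :=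
        mul_le_mul hwσ (by linarith) ht'.le (by positivity)
      linarith
  refine h1.trans ((add_le_add_right hA _).trans ?_)
  rw [← add_mul, ← ENNReal.ofReal_add (by positivity) (by positivity)]
  gcongr
  have ht' : (0 : ℝ) < t ^ (-σ / 2) := by positivity
  nlinarith [mul_nonneg (Real.rpow_nonneg ω.2 σ) ht'.le, Real.rpow_nonneg ω.2 σ]

lemma peD_int {β σ : ℝ} (hσ : 0 < σ) (hσ1 : σ ≤ 1) (hβ : σ < β) : ∃ C : ℝ≥0, ∀ (u : ℂ) (w : Euc n) (ω : ℝ≥0),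
    ω ≤ 1 → ‖u - 1‖ ≤ 7 * ω → (ω = 1 ∨ ‖w‖ ≤ ω) → ∫⁻ v, peD n β u w v ≤ ((C * ω ^ σ : ℝ≥0) : ℝ≥0∞) := by
  have hβ0 : 0 < β := hσ.trans hβ
  have hC : 200 * peA n * ((∫⁻ t in Set.Ioi (0 : ℝ), ENNReal.ofReal (peRho β t * t ^ (-(0 : ℝ) / 2))) +
    ∫⁻ t in Set.Ioi (0 : ℝ), ENNReal.ofReal (peRho β t * t ^ (-σ / 2))) ≠ ⊤ :=
    ENNReal.mul_ne_top (ENNReal.mul_ne_top (by simp) peA_fin.ne)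
      (ENNReal.add_ne_top.2 ⟨(peRho_rpow_fin hβ0 hβ0).ne, (peRho_rpow_fin hβ0 hβ).ne⟩)
  refine ⟨(200 * peA n * ((∫⁻ t in Set.Ioi (0 : ℝ), ENNReal.ofReal (peRho β t * t ^ (-(0 : ℝ) / 2))) +
    ∫⁻ t in Set.Ioi (0 : ℝ), ENNReal.ofReal (peRho β t * t ^ (-σ / 2)))).toNNReal, fun u w ω hω hu hw => ?_⟩
  · rw [ENNReal.coe_mul, ENNReal.coe_toNNReal hC]
    unfold peD
    rw [pe_ker_int (k := fun t v => (u * (peH n t (v + w) : ℂ) - (peH n t v : ℂ))) (peH_meas2 u w)]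
    calc _ ≤ ∫⁻ t in Set.Ioi (0 : ℝ), (200 * peA n * ((ω ^ σ : ℝ≥0) : ℝ≥0∞)) *
          (ENNReal.ofReal (peRho β t * t ^ (-(0 : ℝ) / 2)) + ENNReal.ofReal (peRho β t * t ^ (-σ / 2))) := by
          refine setLIntegral_mono' measurableSet_Ioi fun t ht => ?_
          have ht : 0 < t := ht
          have hr := peRho_nonneg hβ0 ht
          refine (mul_le_mul_right (peD_inner hσ hσ1 ht hω hu hw) _).trans (le_of_eq ?_)
          rw [Real.enorm_eq_ofReal hr, ← ENNReal.ofReal_add (by positivity) (by positivity)]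
          rw [show ((ω ^ σ : ℝ≥0) : ℝ≥0∞) = ENNReal.ofReal ((ω : ℝ) ^ σ) by
            rw [← NNReal.coe_rpow, ENNReal.ofReal_coe_nnreal]]
          rw [ENNReal.ofReal_mul (by positivity), ENNReal.ofReal_mul (by positivity)]
          rw [show peRho β t * t ^ (-(0 : ℝ) / 2) + peRho β t * t ^ (-σ / 2) = peRho β t * (1 + t ^ (-σ / 2)) by
            simp [mul_add], ENNReal.ofReal_mul hr]
          simp only [ENNReal.ofReal_ofNat]
          ring
      _ = _ := by
          have m1 := peRho_meas β
          rw [lintegral_const_mul _ (by fun_prop), lintegral_add_left (by fun_prop)]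
          ring

lemma peG_int {β : ℝ} (hβ : 0 < β) : ∫⁻ v, peG n β v < ⊤ := by
  unfold peG
  rw [pe_ker_int (k := fun t v => (peH n t v : ℂ)) peH_meas1]
  calc _ ≤ ∫⁻ t in Set.Ioi (0 : ℝ), ENNReal.ofReal (peRho β t * t ^ (-(0 : ℝ) / 2)) * peA n := by
        refine setLIntegral_mono' measurableSet_Ioi fun t ht => ?_
        have ht : 0 < t := ht
        rw [Real.enorm_eq_ofReal (peRho_nonneg hβ ht)]
        gcongr
        · simp
        · refine le_trans (le_of_eq ?_) (peH_int ht)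
          refine lintegral_congr fun v => ?_
          simp [enorm_eq_nnnorm]
    _ < ⊤ := by
        rw [lintegral_mul_const' _ _ peA_fin.ne]
        exact ENNReal.mul_lt_top (peRho_rpow_fin hβ hβ) peA_fin

lemma peH_pow {r : ℝ} (hr : 0 < r) {t : ℝ} (ht : 0 < t) :
    ∫⁻ v : Euc n, ‖peH n t v‖ₑ ^ r = ENNReal.ofReal (t ^ (-(n : ℝ) / 2 * r + n / 2)) *
      ∫⁻ v : Euc n, ENNReal.ofReal (Real.exp (-(π * r) * ‖v‖ ^ 2)) := by
  have e : ∀ v : Euc n, ‖peH n t v‖ₑ ^ r = ENNReal.ofReal (t ^ (-(n : ℝ) / 2 * r)) *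
      (fun v => ENNReal.ofReal (Real.exp (-(π * r) * ‖v‖ ^ 2))) ((√t)⁻¹ • v) := fun v => by
    rw [peH_scale ht, enorm_mul, Real.enorm_eq_ofReal (by positivity), Real.enorm_eq_ofReal (peH_nonneg one_pos _),
      ← ENNReal.ofReal_mul (by positivity), ENNReal.ofReal_rpow_of_nonneg _ hr.le]
    · rw [Real.mul_rpow (by positivity) (peH_nonneg one_pos _), ← Real.rpow_mul ht.le,
        ENNReal.ofReal_mul (by positivity)]
      congr 2
      unfold peH
      rw [Real.one_rpow, one_mul, ← Real.exp_mul]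
      congr 1; ring
    · exact mul_nonneg (by positivity) (peH_nonneg one_pos _)
  rw [lintegral_congr e, lintegral_const_mul' _ _ ENNReal.ofReal_ne_top,
    pe_scale_t ht (fun v => ENNReal.ofReal (Real.exp (-(π * r) * ‖v‖ ^ 2))), ← mul_assoc,
    ← ENNReal.ofReal_mul (by positivity), ← Real.rpow_add ht]

lemma peG_pow {β r : ℝ} (hβ : 0 < β) (hr : 1 ≤ r) (h : n * (1 - 1 / r) < β) : ∫⁻ v, peG n β v ^ r < ⊤ := by
  set A := ∫⁻ v : Euc n, ENNReal.ofReal (Real.exp (-(π * r) * ‖v‖ ^ 2)) with hA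
  have hr0 : 0 < r := by linarith
  have hAt : A < ⊤ := pe_gauss_fin (by positivity)
  have hA' : A ^ (1 / r) ≠ ⊤ := (ENNReal.rpow_lt_top_of_nonneg (by positivity) hAt.ne).ne
  have m1 := peRho_meas β
  have key := pe_mink (X := Euc n) (W := ℝ) volume (volume.restrict (Set.Ioi 0)) hr
    (F := fun v t => (Set.Ioi (0 : ℝ)).indicator (fun t => ‖(peRho β t : ℂ) * (peH n t v : ℂ)‖ₑ) t)
    (g := fun t => (Set.Ioi (0 : ℝ)).indicator
      (fun t => ENNReal.ofReal (peRho β t * t ^ (-(n * (1 - 1 / r)) / 2)) * (A ^ (1 / r) + 1)) t) ?_ ?_ ?_ ?_ ?_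
  · rw [setLIntegral_indicator measurableSet_Ioi, Set.inter_self, lintegral_mul_const' _ _ (by simpa using hA')] at key
    have key2 := key.trans_lt (ENNReal.rpow_lt_top_of_nonneg (by positivity)
      (ENNReal.mul_ne_top (peRho_rpow_fin hβ h).ne (by simpa using hA')))
    refine lt_of_le_of_lt (le_of_eq ?_) key2
    refine lintegral_congr fun v => ?_
    rw [setLIntegral_indicator measurableSet_Ioi, Set.inter_self]
    rfl
  · have : (Function.uncurry fun (v : Euc n) (t : ℝ) => (Set.Ioi (0 : ℝ)).indicator (fun t => ‖(peRho β t : ℂ) * (peH n t v : ℂ)‖ₑ) t)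
       = (Prod.snd ⁻¹' Set.Ioi (0 : ℝ)).indicator (fun z : Euc n × ℝ => ‖(peRho β z.2 : ℂ) * (peH n z.2 z.1 : ℂ)‖ₑ) := by
      ext z; rfl
    rw [this]
    refine Measurable.indicator ?_ (measurable_snd measurableSet_Ioi)
    have m2 := pe_ker_meas (β := β) (k := fun t v => (peH n t v : ℂ)) peH_meas1
    have m3 : Measurable (fun z : Euc n × ℝ => z.swap) := measurable_swap
    have m4 := m2.comp m3
    simp only [Function.comp_def, Prod.fst_swap, Prod.snd_swap] at m4
    exact m4
  · exact Measurable.indicator (by fun_prop) measurableSet_Ioi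
  · intro t
    simp only [Set.indicator]
    split_ifs
    · exact ENNReal.mul_ne_top (by simp) (by simpa using hA')
    · simp
  · intro v t
    simp only [Set.indicator]
    split_ifs with ht
    · intro h0
      have ht : 0 < t := ht
      rcases mul_eq_zero.1 h0 with h1 | h1
      · rw [ENNReal.ofReal_eq_zero] at h1
        have h2 : 0 < t ^ (-(n * (1 - 1 / r)) / 2) := by positivity
        have h3 : peRho β t = 0 := by
          refine le_antisymm ?_ (peRho_nonneg hβ ht)
          by_contra hc
          push Not at hc
          have := mul_pos hc h2
          linarith
        simp [h3]
      · simp at h1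
    · simp
  · intro t
    by_cases ht : t ∈ Set.Ioi (0 : ℝ)
    · simp only [Set.indicator_of_mem ht]
      have ht : 0 < t := ht
      have e : ∀ v : Euc n, ‖(peRho β t : ℂ) * (peH n t v : ℂ)‖ₑ ^ r = ENNReal.ofReal (peRho β t) ^ r * ‖peH n t v‖ₑ ^ r := by
        intro v
        rw [enorm_mul, ENNReal.mul_rpow_of_nonneg _ _ hr0.le, ← Real.enorm_eq_ofReal (peRho_nonneg hβ ht)]
        simp [enorm_eq_nnnorm]
      rw [lintegral_congr e, lintegral_const_mul' _ _ (ENNReal.rpow_lt_top_of_nonneg hr0.le (by simp)).ne, peH_pow hr0 ht, ← hA]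
      rw [ENNReal.ofReal_mul (peRho_nonneg hβ ht), ENNReal.mul_rpow_of_nonneg _ _ hr0.le,
        ENNReal.mul_rpow_of_nonneg _ _ hr0.le, mul_assoc]
      refine mul_le_mul_right (mul_le_mul' (le_of_eq ?_) ?_) _
      · rw [ENNReal.ofReal_rpow_of_nonneg (by positivity) hr0.le, ← Real.rpow_mul ht.le]
        congr 2; field_simp; ring
      · calc A = (A ^ (1 / r)) ^ r := by rw [← ENNReal.rpow_mul, one_div_mul_cancel hr0.ne', ENNReal.rpow_one]
          _ ≤ _ := by gcongr; simp
    · simp only [Set.indicator_of_notMem ht]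
      simp [hr0]

end kern2


section lp
open scoped SchwartzMap NNReal
variable {n : ℕ}

/-- twisted shift -/
noncomputable def peS (u : ℂ) (w : Euc n) : 𝓢(Euc n, ℂ) →L[ℂ] 𝓢(Euc n, ℂ) :=
  u • SchwartzMap.compSubConstCLM ℂ (-w)

lemma peS_apply (u : ℂ) (w : Euc n) (f : 𝓢(Euc n, ℂ)) (x : Euc n) : peS u w f x = u * f (x + w) := by
  simp [peS]

/-- twisted difference -/
noncomputable def peT (u : ℂ) (w : Euc n) : 𝓢(Euc n, ℂ) →L[ℂ] 𝓢(Euc n, ℂ) := peS u w - 1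

lemma peT_apply (u : ℂ) (w : Euc n) (f : 𝓢(Euc n, ℂ)) (x : Euc n) : peT u w f x = u * f (x + w) - f x := by
  simp [peT, peS_apply]

lemma peT_apply' (u : ℂ) (w : Euc n) (f : 𝓢(Euc n, ℂ)) : peT u w f = peS u w f - f := by
  simp [peT]

lemma peJ_S {β : ℝ} (hβ : 0 < β) (u : ℂ) (w : Euc n) (f : 𝓢(Euc n, ℂ)) :
    peJ (-β) (peS u w f) = peS u w (peJ (-β) f) := by
  ext x
  rw [peS_apply, peJ_neg_apply hβ, peJ_neg_apply hβ, ← integral_const_mul]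
  refine setIntegral_congr_fun measurableSet_Ioi fun t ht => ?_
  simp only [peS_apply]
  have h : ∫ v, (peH n t v : ℂ) * (u * f (x - v + w)) = u * ∫ v, (peH n t v : ℂ) * f (x + w - v) := by
    rw [← integral_const_mul]
    congr 1
    ext v
    rw [show x - v + w = x + w - v by abel]; ring
  rw [h]; ring

lemma peJ_T {β : ℝ} (hβ : 0 < β) (u : ℂ) (w : Euc n) (f : 𝓢(Euc n, ℂ)) :
    peJ (-β) (peT u w f) = peT u w (peJ (-β) f) := by
  rw [peT_apply', map_sub, peJ_S hβ, peT_apply']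

lemma peJ_T_pow {β : ℝ} (hβ : 0 < β) (u : ℂ) (w : Euc n) (m : ℕ) (f : 𝓢(Euc n, ℂ)) :
    peJ (-β) ((peT u w ^ m) f) = (peT u w ^ m) (peJ (-β) f) := by
  induction m generalizing f with
  | zero => simp
  | succ m ih => rw [pow_succ, mul_apply_eq_comp, ih, peJ_T hβ, mul_apply_eq_comp]

lemma pe_eLp {q : ℝ} (hq : 0 < q) (f : Euc n → ℂ) :
    eLpNorm f (ENNReal.ofReal q) volume = (∫⁻ x, ‖f x‖ₑ ^ q) ^ (1 / q) := by
  rw [eLpNorm_eq_lintegral_rpow_enorm_toReal (by simpa using hq) (by simp), ENNReal.toReal_ofReal hq.le]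

lemma peJ_le {β : ℝ} (hβ : 0 < β) (f : 𝓢(Euc n, ℂ)) (x : Euc n) :
    ‖peJ (-β) f x‖ₑ ≤ peConv (peG n β) (fun y => ‖f y‖ₑ) x := by
  rw [peJ_neg_apply hβ]
  exact pe_ker_bound (k := fun t v => (peH n t v : ℂ)) peH_meas1 f x

lemma pe_f_meas (f : 𝓢(Euc n, ℂ)) : Measurable (fun y => ‖f y‖ₑ) := f.continuous.measurable.enorm

lemma peH_mul_integrable {t : ℝ} (ht : 0 < t) (f : 𝓢(Euc n, ℂ)) (x : Euc n) :
    Integrable (fun v => (peH n t v : ℂ) * f (x - v)) := by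
  have hH : Integrable (fun v : Euc n => (peH n t v : ℂ)) := by
    refine ⟨(peH_meas1.comp (measurable_const.prodMk measurable_id)).aestronglyMeasurable, ?_⟩
    refine lt_of_le_of_lt (le_trans (le_of_eq ?_) (peH_int (n := n) ht)) peA_fin
    refine lintegral_congr fun v => ?_
    simp [enorm_eq_nnnorm]
  obtain ⟨C, hC⟩ := f.decay 0 0
  refine hH.mul_bdd (c := C) ?_ ?_
  · exact (f.continuous.comp (continuous_const.sub continuous_id)).aestronglyMeasurable
  · refine Filter.Eventually.of_forall fun v => ?_
    simpa using hC.2 (x - v)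

lemma peJ_integrable {β : ℝ} (hβ : 0 < β) (f : 𝓢(Euc n, ℂ)) (x : Euc n) :
    IntegrableOn (fun t => (peRho β t : ℂ) * ∫ v, (peH n t v : ℂ) * f (x - v)) (Set.Ioi 0) := by
  constructor
  · refine AEStronglyMeasurable.mul ?_ ?_
    · exact (Complex.measurable_ofReal.comp (peRho_meas β)).aestronglyMeasurable
    · have hm : Measurable (fun z : ℝ × Euc n => (peH n z.1 z.2 : ℂ) * f (x - z.2)) :=
        peH_meas1.mul (f.continuous.measurable.comp (measurable_snd.const_sub x))
      have := hm.stronglyMeasurable.integral_prod_right' (ν := volume)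
      exact this.aestronglyMeasurable
  · refine lt_of_le_of_lt (pe_ker_bound0 (k := fun t v => (peH n t v : ℂ)) peH_meas1 f x) ?_
    obtain ⟨C, hC⟩ := f.decay 0 0
    calc peConv (peG n β) (fun y => ‖f y‖ₑ) x ≤ ∫⁻ v, peG n β v * ENNReal.ofReal C := by
          refine lintegral_mono fun v => ?_
          simp only
          gcongr
          rw [← ofReal_norm]
          exact ENNReal.ofReal_le_ofReal (by simpa using hC.2 (x - v))
      _ = (∫⁻ v, peG n β v) * ENNReal.ofReal C := lintegral_mul_const _ (peG_meas β)
      _ < ⊤ := ENNReal.mul_lt_top (peG_int hβ) (by simp)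

lemma peTJ_le {β : ℝ} (hβ : 0 < β) (u : ℂ) (w : Euc n) (f : 𝓢(Euc n, ℂ)) (x : Euc n) :
    ‖peT u w (peJ (-β) f) x‖ₑ ≤ peConv (peD n β u w) (fun y => ‖f y‖ₑ) x := by
  rw [peT_apply, peJ_neg_apply hβ, peJ_neg_apply hβ, ← integral_const_mul,
    ← integral_sub ((peJ_integrable hβ f (x + w)).const_mul u) (peJ_integrable hβ f x)]
  have e : ∫ t in Set.Ioi (0 : ℝ), (u * ((peRho β t : ℂ) * ∫ v, (peH n t v : ℂ) * f (x + w - v)) -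
      (peRho β t : ℂ) * ∫ v, (peH n t v : ℂ) * f (x - v)) =
      ∫ t in Set.Ioi (0 : ℝ), (peRho β t : ℂ) * ∫ v, (u * (peH n t (v + w) : ℂ) - (peH n t v : ℂ)) * f (x - v) := by
    refine setIntegral_congr_fun measurableSet_Ioi fun t ht => ?_
    have h1 := integral_add_right_eq_self (μ := (volume : Measure (Euc n)))
      (fun v => (peH n t v : ℂ) * f (x + w - v)) w
    have h2 : Integrable (fun v => (peH n t (v + w) : ℂ) * f (x + w - (v + w))) :=
      (peH_mul_integrable ht f (x + w)).comp_add_right w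
    simp only [add_sub_add_right_eq_sub] at h1 h2
    rw [← h1, mul_left_comm, ← mul_sub, ← integral_const_mul, ← integral_sub (h2.const_mul u) (peH_mul_integrable ht f x)]
    congr 2
    ext v; ring
  rw [e]
  exact pe_ker_bound (k := fun t v => (u * (peH n t (v + w) : ℂ) - (peH n t v : ℂ))) (peH_meas2 u w) f x

lemma pe_young_eLp {q : ℝ} (hq : 1 ≤ q) {K : Euc n → ℝ≥0∞} (hK : Measurable K) (h f : 𝓢(Euc n, ℂ))
    (hh : ∀ x, ‖h x‖ₑ ≤ peConv K (fun y => ‖f y‖ₑ) x) :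
    eLpNorm h (ENNReal.ofReal q) volume ≤ (∫⁻ v, K v) * eLpNorm f (ENNReal.ofReal q) volume := by
  have hq0 : 0 < q := by linarith
  rw [pe_eLp hq0, pe_eLp hq0]
  calc (∫⁻ x, ‖h x‖ₑ ^ q) ^ (1 / q) ≤ ((∫⁻ v, K v) ^ q * ∫⁻ v, ‖f v‖ₑ ^ q) ^ (1 / q) := by
        refine ENNReal.rpow_le_rpow ?_ (by positivity)
        refine le_trans (lintegral_mono fun x => ENNReal.rpow_le_rpow (hh x) hq0.le) ?_
        exact pe_young1 hq hK (pe_f_meas f)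
    _ = _ := by
        rw [ENNReal.mul_rpow_of_nonneg _ _ (by positivity), ← ENNReal.rpow_mul, mul_one_div_cancel hq0.ne', ENNReal.rpow_one]

lemma pe_F0 {β : ℝ} (hβ : 0 < β) : ∃ C : ℝ≥0, ∀ q : ℝ, 1 ≤ q → ∀ f : 𝓢(Euc n, ℂ),
    eLpNorm (peJ (-β) f) (ENNReal.ofReal q) volume ≤ C * eLpNorm f (ENNReal.ofReal q) volume := by
  refine ⟨(∫⁻ v, peG n β v).toNNReal, fun q hq f => ?_⟩
  rw [ENNReal.coe_toNNReal (peG_int hβ).ne]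
  exact pe_young_eLp hq (peG_meas β) _ f (peJ_le hβ f)

lemma pe_Fs {β p r s : ℝ} (hp : 0 < p) (hr : 1 ≤ r) (hs : 0 < s) (h1 : 1 / s + 2 / p = 1)
    (h2 : 1 / r = 1 / s + 1 / p) (hβ : 0 < β) (hβp : n / p < β) : ∃ C : ℝ≥0, ∀ f : 𝓢(Euc n, ℂ),
    eLpNorm (peJ (-β) f) (ENNReal.ofReal s) volume ≤ C * eLpNorm f (ENNReal.ofReal r) volume := by
  have hr0 : 0 < r := by linarith
  have hG : ∫⁻ v, peG n β v ^ r < ⊤ := by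
    refine peG_pow hβ hr ?_
    rw [show 1 - 1 / r = 1 / p by linarith [show 2 / p = 1 / p + 1 / p by ring]]
    simpa [div_eq_mul_inv] using hβp
  refine ⟨((∫⁻ v, peG n β v ^ r) ^ (1 / r)).toNNReal, fun f => ?_⟩
  rw [ENNReal.coe_toNNReal (ENNReal.rpow_lt_top_of_nonneg (by positivity) hG.ne).ne, pe_eLp hs, pe_eLp hr0]
  calc (∫⁻ x, ‖peJ (-β) f x‖ₑ ^ s) ^ (1 / s) ≤
        ((∫⁻ v, peG n β v ^ r) ^ (s / r) * (∫⁻ v, ‖f v‖ₑ ^ r) ^ (s / r)) ^ (1 / s) := by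
        refine ENNReal.rpow_le_rpow ?_ (by positivity)
        refine le_trans (lintegral_mono fun x => ENNReal.rpow_le_rpow (peJ_le hβ f x) hs.le) ?_
        exact pe_youngs hp hr0 hs h1 h2 (peG_meas β) (pe_f_meas f)
    _ = _ := by
        rw [ENNReal.mul_rpow_of_nonneg _ _ (by positivity), ← ENNReal.rpow_mul, ← ENNReal.rpow_mul,
          show s / r * (1 / s) = 1 / r by field_simp]

lemma pe_Finf {β p r : ℝ} (hrp : r.HolderConjugate p) (hβ : 0 < β) (hβp : n / p < β) :
    ∃ C : ℝ≥0, ∀ f : 𝓢(Euc n, ℂ),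
    eLpNorm (peJ (-β) f) ∞ volume ≤ C * eLpNorm f (ENNReal.ofReal p) volume := by
  have hr0 : 0 < r := hrp.pos
  have hp0 : 0 < p := hrp.symm.pos
  have hG : ∫⁻ v, peG n β v ^ r < ⊤ := by
    refine peG_pow hβ hrp.lt.le ?_
    rw [show 1 - 1 / r = 1 / p by have := hrp.inv_add_inv_eq_one; simp only [one_div]; linarith]
    simpa [div_eq_mul_inv] using hβp
  refine ⟨((∫⁻ v, peG n β v ^ r) ^ (1 / r)).toNNReal, fun f => ?_⟩
  rw [ENNReal.coe_toNNReal (ENNReal.rpow_lt_top_of_nonneg (by positivity) hG.ne).ne, pe_eLp hp0, eLpNorm_exponent_top]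
  refine eLpNormEssSup_le_of_ae_enorm_bound (Filter.Eventually.of_forall fun x => ?_)
  exact (peJ_le hβ f x).trans (pe_youngInf hrp (peG_meas β) (pe_f_meas f) x)

/-- compatibility of the twist `u`, shift `w` and size `ω` -/
def peOK (u : ℂ) (w : Euc n) (ω : ℝ≥0) : Prop :=
  ω ≤ 1 ∧ ‖u - 1‖ ≤ 7 * ω ∧ (ω = 1 ∨ ‖w‖ ≤ ω)

lemma pe_F1 {β σ : ℝ} (hσ : 0 < σ) (hσ1 : σ ≤ 1) (hβ : σ < β) : ∃ C : ℝ≥0, ∀ q : ℝ, 1 ≤ q →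
    ∀ (f : 𝓢(Euc n, ℂ)) (u : ℂ) (w : Euc n) (ω : ℝ≥0), peOK u w ω →
    eLpNorm (peT u w (peJ (-β) f)) (ENNReal.ofReal q) volume ≤
      ((C * ω ^ σ : ℝ≥0) : ℝ≥0∞) * eLpNorm f (ENNReal.ofReal q) volume := by
  obtain ⟨C, hC⟩ := peD_int (n := n) hσ hσ1 hβ
  refine ⟨C, fun q hq f u w ω h => ?_⟩
  refine (pe_young_eLp hq (peD_meas β u w) _ f (peTJ_le (hσ.trans hβ) u w f)).trans ?_
  gcongr
  exact hC u w ω h.1 h.2.1 h.2.2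

lemma pe_F1_pow {β σ : ℝ} (hσ : 0 < σ) (hσ1 : σ ≤ 1) (hβ : σ < β) (m : ℕ) : ∃ C : ℝ≥0, ∀ q : ℝ, 1 ≤ q →
    ∀ (f : 𝓢(Euc n, ℂ)) (u : ℂ) (w : Euc n) (ω : ℝ≥0), peOK u w ω →
    eLpNorm ((peT u w ^ m) (peJ (-(m * β)) f)) (ENNReal.ofReal q) volume ≤
      ((C * ω ^ (m * σ) : ℝ≥0) : ℝ≥0∞) * eLpNorm f (ENNReal.ofReal q) volume := by
  obtain ⟨C, hC⟩ := pe_F1 (n := n) hσ hσ1 hβ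
  induction m with
  | zero => exact ⟨1, fun q hq f u w ω h => by simp [peJ_zero]⟩
  | succ m ih =>
    obtain ⟨D, hD⟩ := ih
    refine ⟨C * D, fun q hq f u w ω h => ?_⟩
    have e : (peT u w ^ (m + 1)) (peJ (-((m + 1 : ℕ) * β)) f) =
        peT u w (peJ (-β) ((peT u w ^ m) (peJ (-(m * β)) f))) := by
      rw [peJ_T_pow (hσ.trans hβ), peJ_peJ, pow_succ', mul_apply_eq_comp]
      congr 4; push_cast; ring
    rw [e]
    refine (hC q hq _ u w ω h).trans ?_
    refine (mul_le_mul_right (hD q hq f u w ω h) _).trans (le_of_eq ?_)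
    rw [← mul_assoc, ← ENNReal.coe_mul]
    congr 2
    push_cast
    rw [add_mul, one_mul, NNReal.rpow_add_of_nonneg _ (by positivity) hσ.le]
    ring

lemma peS_norm {q : ℝ≥0∞} {u : ℂ} (hu : ‖u‖ = 1) (w : Euc n) (f : 𝓢(Euc n, ℂ)) :
    eLpNorm (peS u w f) q volume = eLpNorm f q volume := by
  have h1 := eLpNorm_comp_measurePreserving (p := q) (μ := (volume : Measure (Euc n)))
    f.continuous.aestronglyMeasurable (measurePreserving_add_right volume w)
  rw [← h1]
  refine eLpNorm_congr_norm_ae (Filter.Eventually.of_forall fun x => ?_)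
  simp [peS_apply, hu]

lemma peT_norm {q : ℝ≥0∞} (hq : 1 ≤ q) {u : ℂ} (hu : ‖u‖ = 1) (w : Euc n) (f : 𝓢(Euc n, ℂ)) :
    eLpNorm (peT u w f) q volume ≤ 2 * eLpNorm f q volume := by
  rw [peT_apply']
  refine (eLpNorm_sub_le (peS u w f).continuous.aestronglyMeasurable f.continuous.aestronglyMeasurable hq).trans ?_
  rw [peS_norm hu, two_mul]

lemma peT_pow_norm {q : ℝ≥0∞} (hq : 1 ≤ q) {u : ℂ} (hu : ‖u‖ = 1) (w : Euc n) (m : ℕ) (f : 𝓢(Euc n, ℂ)) :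
    eLpNorm ((peT u w ^ m) f) q volume ≤ ((2 ^ m : ℝ≥0) : ℝ≥0∞) * eLpNorm f q volume := by
  induction m generalizing f with
  | zero => simp
  | succ m ih =>
    rw [pow_succ', mul_apply_eq_comp]
    refine (peT_norm hq hu w _).trans ?_
    refine (mul_le_mul_right (ih f) _).trans (le_of_eq ?_)
    push_cast; ring

end lp


section repr
open scoped SchwartzMap NNReal
variable {n : ℕ}

/-- spatial part of `W` -/
noncomputable def peW (W : Euc (n + 1)) : Euc n := WithLp.toLp 2 (fun i => W i.succ)
/-- twist of `W` -/
noncomputable def peU (W : Euc (n + 1)) : ℂ := cexp ((2 * π * W 0 : ℝ) * I)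
/-- lift of frequency -/
noncomputable def peXi (ξ : Euc n) : Euc (n + 1) := WithLp.toLp 2 (Fin.cons 1 (fun i => ξ i))
/-- size of `W` -/
noncomputable def peOm (W : Euc (n + 1)) : ℝ≥0 := min 1 ‖W‖₊
/-- weight -/
noncomputable def peWt (α : ℝ) (W : Euc (n + 1)) : ℝ := ‖W‖ ^ (-((n : ℝ) + 1) - α)

lemma pe_inner (W : Euc (n + 1)) (ξ : Euc n) : inner ℝ W (peXi ξ) = W 0 + inner ℝ (peW W) ξ := by
  simp [PiLp.inner_apply, peXi, peW, Fin.sum_univ_succ]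

lemma pe_normXi (ξ : Euc n) : ‖peXi ξ‖ ^ 2 = 1 + ‖ξ‖ ^ 2 := by
  simp [EuclideanSpace.norm_sq_eq, peXi, Fin.sum_univ_succ]

lemma pe_normW (W : Euc (n + 1)) : ‖W‖ ^ 2 = (W 0) ^ 2 + ‖peW W‖ ^ 2 := by
  simp [EuclideanSpace.norm_sq_eq, peW, Fin.sum_univ_succ]

lemma pe_exp_le (θ : ℝ) : ‖cexp ((2 * π * θ : ℝ) * I) - 1‖ ≤ 7 * |θ| := by
  rw [mul_comm]
  refine (Real.norm_exp_I_mul_ofReal_sub_one_le).trans ?_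
  rw [Real.norm_eq_abs, abs_mul, abs_of_pos (by positivity)]
  have := Real.pi_lt_d2
  nlinarith [abs_nonneg θ]

lemma pe_exp_le2 (θ : ℝ) : ‖cexp ((2 * π * θ : ℝ) * I) - 1‖ ≤ 7 := by
  refine (norm_sub_le _ _).trans ?_
  rw [Complex.norm_exp_ofReal_mul_I]; simp; norm_num

lemma pe_exp_om {θ : ℝ} {W : Euc (n + 1)} (h : |θ| ≤ ‖W‖) : ‖cexp ((2 * π * θ : ℝ) * I) - 1‖ ≤ 7 * peOm W := by
  have : ((peOm W : ℝ≥0) : ℝ) = min 1 ‖W‖ := by simp [peOm]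
  rw [this]
  rcases min_choice 1 ‖W‖ with h1 | h1
  · rw [h1, mul_one]; exact pe_exp_le2 θ
  · rw [h1]; exact (pe_exp_le θ).trans (by gcongr)

lemma peU_norm (W : Euc (n + 1)) : ‖peU W‖ = 1 := Complex.norm_exp_ofReal_mul_I _

lemma pe_W0 (W : Euc (n + 1)) : |W 0| ≤ ‖W‖ := by
  refine abs_le_of_sq_le_sq ?_ (norm_nonneg _)
  rw [pe_normW]; nlinarith [sq_nonneg ‖peW W‖]

lemma pe_Ww (W : Euc (n + 1)) : ‖peW W‖ ≤ ‖W‖ := by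
  refine le_of_sq_le_sq ?_ (norm_nonneg _)
  rw [pe_normW]; nlinarith [sq_nonneg (W 0)]

lemma peOK_W (W : Euc (n + 1)) : peOK (peU W) (peW W) (peOm W) := by
  refine ⟨min_le_left _ _, pe_exp_om (pe_W0 W), ?_⟩
  rcases min_choice 1 ‖W‖₊ with h1 | h1
  · left; exact h1
  · right; rw [peOm, h1]; exact pe_Ww W

lemma peOK_W1 (W : Euc (n + 1)) : peOK 1 (peW W) (peOm W) := by
  obtain ⟨h1, h2, h3⟩ := peOK_W W
  refine ⟨h1, ?_, h3⟩
  simp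

lemma pe_wfin {α γ : ℝ} (hα : 0 < α) (hγ : α < γ) :
    ∫⁻ W : Euc (n + 1), ENNReal.ofReal ((peOm W : ℝ) ^ γ * peWt α W) < ⊤ := by
  have h : Integrable (fun W : Euc (n + 1) => (min 1 ‖W‖) ^ γ * ‖W‖ ^ (-((n : ℝ) + 1) - α)) := by
    rw [integrable_fun_norm_addHaar volume (f := fun y : ℝ => (min 1 y) ^ γ * y ^ (-((n : ℝ) + 1) - α))]
    rw [finrank_euclideanSpace_fin, Nat.add_sub_cancel]
    rw [← Set.Ioc_union_Ioi_eq_Ioi (zero_le_one' ℝ)]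
    have e : ∀ y : ℝ, 0 < y → y ^ n • ((min 1 y) ^ γ * y ^ (-((n : ℝ) + 1) - α)) = (min 1 y) ^ γ * y ^ (-1 - α) := by
      intro y hy
      rw [smul_eq_mul, ← Real.rpow_natCast, mul_left_comm, ← Real.rpow_add hy]
      congr 2; ring
    refine IntegrableOn.union ?_ ?_
    · have h1 : IntegrableOn (fun y : ℝ => y ^ (γ - 1 - α)) (Set.Ioc 0 1) := by
        rw [← intervalIntegrable_iff_integrableOn_Ioc_of_le zero_le_one]
        exact intervalIntegral.intervalIntegrable_rpow' (by linarith)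
      refine h1.congr_fun (fun y hy => ?_) measurableSet_Ioc
      simp only
      rw [e y hy.1, min_eq_right hy.2, ← Real.rpow_add hy.1]
      congr 1; ring
    · have h1 : IntegrableOn (fun y : ℝ => y ^ (-1 - α)) (Set.Ioi 1) :=
        integrableOn_Ioi_rpow_of_lt (by linarith) one_pos
      refine h1.congr_fun (fun y hy => ?_) measurableSet_Ioi
      simp only
      have hy : 1 < y := hy
      rw [e y (by linarith), min_eq_left hy.le, Real.one_rpow, one_mul]
  refine lt_of_le_of_lt (le_of_eq ?_) h.lintegral_lt_top
  refine lintegral_congr fun W => ?_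
  simp [peOm, peWt]

/-- the multiplier integral -/
noncomputable def peQ (k : ℕ) (α : ℝ) (Ξ : Euc (n + 1)) : ℝ≥0∞ :=
  ∫⁻ W : Euc (n + 1), ENNReal.ofReal (peWt α W * ‖cexp ((2 * π * inner ℝ W Ξ : ℝ) * I) - 1‖ ^ (2 * k))

/-- base vector -/
noncomputable def peE0 (n : ℕ) : Euc (n + 1) := EuclideanSpace.single 0 1

lemma peE0_norm : ‖peE0 n‖ = 1 := by simp [peE0]

lemma peWt_nonneg (α : ℝ) (W : Euc (n + 1)) : 0 ≤ peWt α W := Real.rpow_nonneg (norm_nonneg _) _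

lemma peQ_fin {k : ℕ} {α : ℝ} (hα : 0 < α) (hk : α < 2 * k) : peQ k α (peE0 n) < ⊤ := by
  have h := pe_wfin (n := n) (γ := (2 * k : ℕ)) hα (by exact_mod_cast hk)
  have h2 := ENNReal.mul_lt_top (ENNReal.ofReal_lt_top (r := 7 ^ (2 * k))) h
  rw [← lintegral_const_mul' _ _ ENNReal.ofReal_ne_top] at h2
  refine lt_of_le_of_lt (lintegral_mono fun W => ?_) h2
  simp only
  rw [← ENNReal.ofReal_mul (by positivity)]
  refine ENNReal.ofReal_le_ofReal ?_
  have h3 : |inner ℝ W (peE0 n)| ≤ ‖W‖ := by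
    have := abs_real_inner_le_norm W (peE0 n)
    rwa [peE0_norm, mul_one] at this
  have h4 := pow_le_pow_left₀ (norm_nonneg _) (pe_exp_om h3) (2 * k)
  rw [Real.rpow_natCast]
  calc _ ≤ peWt α W * (7 * peOm W) ^ (2 * k) := mul_le_mul_of_nonneg_left h4 (peWt_nonneg _ _)
    _ = _ := by rw [mul_pow]; ring

lemma peQ_pos {k : ℕ} {α : ℝ} : 0 < peQ k α (peE0 n) := by
  rw [pos_iff_ne_zero, peQ]
  have hc : Continuous (fun W : Euc (n + 1) => cexp ((2 * π * inner ℝ W (peE0 n) : ℝ) * I) - 1) := by fun_prop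
  intro h0
  rw [lintegral_eq_zero_iff] at h0
  · have hopen : IsOpen ({W : Euc (n + 1) | W ≠ 0} ∩ {W | cexp ((2 * π * inner ℝ W (peE0 n) : ℝ) * I) - 1 ≠ 0}) :=
      isOpen_ne.inter (isOpen_ne.preimage hc)
    have hne : ({W : Euc (n + 1) | W ≠ 0} ∩ {W | cexp ((2 * π * inner ℝ W (peE0 n) : ℝ) * I) - 1 ≠ 0}).Nonempty := by
      refine ⟨(1 / 2 : ℝ) • peE0 n, ?_, ?_⟩
      · intro h
        have := congrArg norm h
        rw [norm_smul, peE0_norm] at this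
        norm_num at this
      · simp only [Set.mem_setOf_eq]
        rw [real_inner_smul_left, real_inner_self_eq_norm_sq, peE0_norm,
          show ((2 * π * (1 / 2 * 1 ^ 2) : ℝ) : ℂ) * I = π * I by push_cast; ring, Complex.exp_pi_mul_I]
        norm_num
    have hpos := hopen.measure_pos volume hne
    refine hpos.ne' ?_
    refine measure_mono_null ?_ h0
    intro W hW
    simp only [Set.mem_compl_iff, Set.mem_setOf_eq, Pi.zero_apply]
    intro h1
    rw [ENNReal.ofReal_eq_zero] at h1
    have h2 : 0 < peWt α W := Real.rpow_pos_of_pos (norm_pos_iff.2 hW.1) _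
    have h3 : 0 < ‖cexp ((2 * π * inner ℝ W (peE0 n) : ℝ) * I) - 1‖ := norm_pos_iff.2 hW.2
    have : 0 < peWt α W * ‖cexp ((2 * π * inner ℝ W (peE0 n) : ℝ) * I) - 1‖ ^ (2 * k) := by positivity
    linarith
  · unfold peWt
    have := hc.measurable
    fun_prop

lemma peQ_eq (k : ℕ) (α : ℝ) {Ξ : Euc (n + 1)} (hΞ : Ξ ≠ 0) :
    peQ k α Ξ = ENNReal.ofReal (‖Ξ‖ ^ α) * peQ k α (peE0 n) := by
  set R := ‖Ξ‖ with hR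
  have hR0 : 0 < R := norm_pos_iff.2 hΞ
  set A := Submodule.reflection (Submodule.span ℝ {R • peE0 n - Ξ})ᗮ with hAdef
  have hA : A (R • peE0 n) = Ξ := by
    apply Submodule.reflection_sub
    rw [norm_smul, peE0_norm, mul_one, Real.norm_of_nonneg hR0.le]
  have hmp : MeasurePreserving A volume volume := A.measurePreserving
  unfold peQ
  rw [← hmp.lintegral_comp_emb A.toHomeomorph.measurableEmbedding]
  have e : ∀ W : Euc (n + 1), ENNReal.ofReal (peWt α (A W) * ‖cexp ((2 * π * inner ℝ (A W) Ξ : ℝ) * I) - 1‖ ^ (2 * k)) =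
      ENNReal.ofReal (R ^ ((n : ℝ) + 1 + α)) * (fun W => ENNReal.ofReal (peWt α W * ‖cexp ((2 * π * inner ℝ W (peE0 n) : ℝ) * I) - 1‖ ^ (2 * k))) (R • W) := by
    intro W
    simp only
    have h1 : inner ℝ (A W) Ξ = inner ℝ (R • W) (peE0 n) := by
      conv_lhs => rw [← hA]
      rw [LinearIsometryEquiv.inner_map_map, real_inner_smul_left, real_inner_smul_right]
    rw [h1, ← ENNReal.ofReal_mul (by positivity), ← mul_assoc]
    congr 2
    unfold peWt
    rw [LinearIsometryEquiv.norm_map, norm_smul, Real.norm_of_nonneg hR0.le, Real.mul_rpow hR0.le (norm_nonneg _), ← mul_assoc,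
      ← Real.rpow_add hR0]
    simp
  rw [lintegral_congr e, lintegral_const_mul' _ _ ENNReal.ofReal_ne_top, pe_scale volume
    (fun W => ENNReal.ofReal (peWt α W * ‖cexp ((2 * π * inner ℝ W (peE0 n) : ℝ) * I) - 1‖ ^ (2 * k))) hR0, ← mul_assoc,
    ← ENNReal.ofReal_mul (by positivity)]
  congr 2
  rw [finrank_euclideanSpace_fin, ← Real.rpow_natCast, ← Real.rpow_neg hR0.le, ← Real.rpow_add hR0]
  congr 1; push_cast; ring

end repr


section rep
open scoped SchwartzMap NNReal
variable {n : ℕ}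

lemma peS_fourier (u : ℂ) (w : Euc n) (h : 𝓢(Euc n, ℂ)) (ξ : Euc n) :
    𝓕 (peS u w h) ξ = u * cexp ((2 * π * inner ℝ w ξ : ℝ) * I) * 𝓕 h ξ := by
  have e : ⇑(peS u w h) = u • ((h : Euc n → ℂ) ∘ fun v => v + w) := by
    ext x; simp [peS_apply]
  rw [SchwartzMap.fourier_coe, SchwartzMap.fourier_coe, e]
  have h2 := VectorFourier.fourierIntegral_comp_add_right (V := Euc n) Real.fourierChar volume (innerₗ (Euc n)) h w
  have h3 : 𝓕 ((h : Euc n → ℂ) ∘ fun v => v + w) ξ = cexp ((2 * π * inner ℝ w ξ : ℝ) * I) * 𝓕 (h : Euc n → ℂ) ξ := by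
    have := congrFun h2 ξ
    simp only [innerₗ_apply_apply, Circle.smul_def, Real.fourierChar_apply, smul_eq_mul] at this
    exact this
  rw [show 𝓕 (u • ((h : Euc n → ℂ) ∘ fun v => v + w)) ξ = u * 𝓕 ((h : Euc n → ℂ) ∘ fun v => v + w) ξ by
    rw [Real.fourier_eq, Real.fourier_eq, ← smul_eq_mul, ← integral_smul]
    refine integral_congr_ae (Filter.Eventually.of_forall fun v => ?_)
    simp only [Pi.smul_apply]
    rw [smul_comm], h3, ← mul_assoc]

lemma peS_pow_fourier (u : ℂ) (w : Euc n) (m : ℕ) (h : 𝓢(Euc n, ℂ)) (ξ : Euc n) :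
    𝓕 ((peS u w ^ m) h) ξ = (u * cexp ((2 * π * inner ℝ w ξ : ℝ) * I)) ^ m * 𝓕 h ξ := by
  induction m with
  | zero => simp
  | succ m ih => rw [pow_succ', mul_apply_eq_comp, peS_fourier, ih]; ring

lemma peT_fourier (u : ℂ) (w : Euc n) (h : 𝓢(Euc n, ℂ)) (ξ : Euc n) :
    𝓕 (peT u w h) ξ = (u * cexp ((2 * π * inner ℝ w ξ : ℝ) * I) - 1) * 𝓕 h ξ := by
  have : 𝓕 (peT u w h) = 𝓕 (peS u w h) - 𝓕 h := by
    rw [eq_sub_iff_add_eq, ← FourierTransform.fourier_add, peT_apply', sub_add_cancel]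
  rw [this, sub_apply, peS_fourier]; ring

lemma peT_pow_fourier (u : ℂ) (w : Euc n) (m : ℕ) (h : 𝓢(Euc n, ℂ)) (ξ : Euc n) :
    𝓕 ((peT u w ^ m) h) ξ = (u * cexp ((2 * π * inner ℝ w ξ : ℝ) * I) - 1) ^ m * 𝓕 h ξ := by
  induction m with
  | zero => simp
  | succ m ih => rw [pow_succ', mul_apply_eq_comp, peT_fourier, ih]; ring

/-- the symmetric difference -/
noncomputable def peP (k : ℕ) (u : ℂ) (w : Euc n) (h : 𝓢(Euc n, ℂ)) : 𝓢(Euc n, ℂ) :=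
  ((-1 : ℂ) ^ k) • (peS u⁻¹ (-w) ^ k) ((peT u w ^ (2 * k)) h)

lemma pe_unit (k : ℕ) {z : ℂ} (hz : ‖z‖ = 1) : (-1) ^ k * ((z⁻¹) ^ k * (z - 1) ^ (2 * k)) = ((‖z - 1‖ ^ (2 * k) : ℝ) : ℂ) := by
  rw [pow_mul, pow_mul, ← mul_pow, ← mul_pow]
  push_cast
  congr 1
  have hz0 : z ≠ 0 := by intro h; simp [h] at hz
  have hi : z⁻¹ = (starRingEnd ℂ) z := by rw [Complex.inv_def, Complex.normSq_eq_norm_sq, hz]; simp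
  rw [← Complex.mul_conj', map_sub, map_one, ← hi]
  field_simp
  ring

lemma peP_fourier (k : ℕ) (W : Euc (n + 1)) (h : 𝓢(Euc n, ℂ)) (ξ : Euc n) :
    𝓕 (peP k (peU W) (peW W) h) ξ = ((‖cexp ((2 * π * inner ℝ W (peXi ξ) : ℝ) * I) - 1‖ ^ (2 * k) : ℝ) : ℂ) * 𝓕 h ξ := by
  have e1 : 𝓕 (peP k (peU W) (peW W) h) = ((-1 : ℂ) ^ k) • 𝓕 ((peS (peU W)⁻¹ (-(peW W)) ^ k) ((peT (peU W) (peW W) ^ (2 * k)) h)) := by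
    rw [peP, FourierTransform.fourier_smul]
  have e2 : cexp ((2 * π * inner ℝ W (peXi ξ) : ℝ) * I) = peU W * cexp ((2 * π * inner ℝ (peW W) ξ : ℝ) * I) := by
    rw [pe_inner, peU, ← Complex.exp_add]; congr 1; push_cast; ring
  have e3 : (peU W)⁻¹ * cexp ((2 * π * inner ℝ (-(peW W)) ξ : ℝ) * I) = (cexp ((2 * π * inner ℝ W (peXi ξ) : ℝ) * I))⁻¹ := by
    rw [e2, mul_inv, ← Complex.exp_neg]; congr 2; rw [inner_neg_left]; push_cast; ring
  rw [e1, smul_apply, peS_pow_fourier, peT_pow_fourier, e3, ← e2, ← pe_unit k (Complex.norm_exp_ofReal_mul_I _), smul_eq_mul]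
  ring

lemma pe_inv (h : 𝓢(Euc n, ℂ)) (x : Euc n) : h x = ∫ ξ, cexp ((2 * π * inner ℝ ξ x : ℝ) * I) * 𝓕 h ξ := by
  have h1 : 𝓕⁻ (𝓕 h) = h := FourierTransform.fourierInv_fourier_eq h
  conv_lhs => rw [← h1]
  rw [SchwartzMap.fourierInv_coe, Real.fourierInv_eq']
  rfl

lemma peU_cont : Continuous (peU (n := n)) := by unfold peU; fun_prop
lemma peW_cont : Continuous (peW (n := n)) := by unfold peW; fun_prop
lemma peXi_cont : Continuous (peXi (n := n)) := by
  unfold peXi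
  refine (PiLp.continuous_toLp 2 _).comp (continuous_pi fun i => ?_)
  refine Fin.cases ?_ (fun j => ?_) i
  · simp only [Fin.cons_zero]; fun_prop
  · simp only [Fin.cons_succ]; fun_prop

lemma peT_pow_cont (m : ℕ) (h : 𝓢(Euc n, ℂ)) :
    Continuous (fun z : Euc n × Euc (n + 1) => (peT (peU z.2) (peW z.2) ^ m) h z.1) := by
  induction m with
  | zero =>
    have h0 := h.continuous.comp (continuous_fst (X := Euc n) (Y := Euc (n + 1)))
    simp only [Function.comp_def] at h0
    simpa using h0
  | succ m ih =>
    simp only [pow_succ', mul_apply_eq_comp, peT_apply]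
    have h1 : Continuous (fun z : Euc n × Euc (n + 1) => ((z.1 + peW z.2, z.2) : Euc n × Euc (n + 1))) := by
      have := peW_cont (n := n); fun_prop
    have h2 := ih.comp h1
    simp only [Function.comp_def] at h2
    exact ((peU_cont.comp continuous_snd).mul h2).sub ih

lemma peS_pow_apply (u : ℂ) (w : Euc n) (k : ℕ) (g : 𝓢(Euc n, ℂ)) (x : Euc n) : (peS u w ^ k) g x = u ^ k * g (x + k • w) := by
  induction k generalizing x with
  | zero => simp
  | succ k ih =>
    rw [pow_succ', mul_apply_eq_comp, peS_apply, ih, pow_succ', succ_nsmul', add_assoc, mul_assoc]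

lemma peP_cont (k : ℕ) (h : 𝓢(Euc n, ℂ)) :
    Continuous (fun z : Euc n × Euc (n + 1) => peP k (peU z.2) (peW z.2) h z.1) := by
  simp only [peP, smul_apply, peS_pow_apply]
  have h1 : Continuous (fun z : Euc n × Euc (n + 1) => ((z.1 + k • (-(peW z.2)), z.2) : Euc n × Euc (n + 1))) := by
    have := peW_cont (n := n); fun_prop
  have h2 := (peT_pow_cont (2 * k) h).comp h1
  simp only [Function.comp_def] at h2
  have h3 : Continuous (fun z : Euc n × Euc (n + 1) => (peU z.2)⁻¹) :=
    (peU_cont.comp continuous_snd).inv₀ (fun z hz => by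
      have := peU_norm z.2
      simp only [Function.comp_apply] at hz
      simp [hz] at this)
  exact Continuous.const_smul (Continuous.mul (h3.pow k) h2) ((-1 : ℂ) ^ k)

lemma peJ_fourier (s : ℝ) (h : 𝓢(Euc n, ℂ)) (ξ : Euc n) : 𝓕 (peJ s h) ξ = (((1 + ‖ξ‖ ^ 2) ^ (s / 2) : ℝ) : ℂ) * 𝓕 h ξ := by
  rw [peJ, SchwartzMap.fourierMultiplierCLM_apply, FourierTransform.fourier_fourierInv_eq,
    SchwartzMap.smulLeftCLM_apply_apply (peJ_symb s)]
  rfl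

lemma peWt_meas (α : ℝ) : Measurable (peWt (n := n) α) := by unfold peWt; fun_prop

lemma pe_rep (k : ℕ) {α : ℝ} (hα : 0 < α) (hk : α < 2 * k) :
    ∃ c : ℝ, 0 < c ∧ ∀ (h : 𝓢(Euc n, ℂ)) (x : Euc n),
      Integrable (fun W : Euc (n + 1) => (peWt α W : ℂ) * peP k (peU W) (peW W) h x) ∧
      ∫ W : Euc (n + 1), (peWt α W : ℂ) * peP k (peU W) (peW W) h x = c * peJ α h x := by
  set Q := peQ k α (peE0 n) with hQ
  have hQf : Q < ⊤ := peQ_fin hα hk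
  have hQp : 0 < Q := peQ_pos
  refine ⟨Q.toReal, ENNReal.toReal_pos hQp.ne' hQf.ne, fun h x => ?_⟩
  let m : Euc (n + 1) → Euc n → ℝ := fun W ξ => ‖cexp ((2 * π * inner ℝ W (peXi ξ) : ℝ) * I) - 1‖ ^ (2 * k)
  have hm0 : ∀ W ξ, 0 ≤ m W ξ := fun W ξ => by positivity
  have hmc : Continuous (fun z : Euc (n + 1) × Euc n => m z.1 z.2) := by
    have := peXi_cont (n := n)
    fun_prop
  have hXi : ∀ ξ : Euc n, ENNReal.ofReal (‖peXi ξ‖ ^ α) = ENNReal.ofReal ((1 + ‖ξ‖ ^ 2) ^ (α / 2)) := fun ξ => by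
    rw [← pe_normXi, ← Real.rpow_natCast, ← Real.rpow_mul (norm_nonneg _)]
    congr 2; push_cast; ring
  have hXi0 : ∀ ξ : Euc n, peXi ξ ≠ 0 := fun ξ h0 => by
    have := pe_normXi ξ
    rw [h0] at this; simp at this; nlinarith [sq_nonneg ‖ξ‖]
  have hQe : ∀ ξ : Euc n, ∫⁻ W, ENNReal.ofReal (peWt α W * m W ξ) = ENNReal.ofReal ((1 + ‖ξ‖ ^ 2) ^ (α / 2)) * Q := fun ξ => by
    rw [← hXi, ← peQ_eq k α (hXi0 ξ)]; rfl
  let G : Euc (n + 1) → Euc n → ℂ := fun W ξ => (peWt α W : ℂ) * (cexp ((2 * π * inner ℝ ξ x : ℝ) * I) * ((m W ξ : ℂ) * 𝓕 h ξ))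
  have hG : ∀ W, (peWt α W : ℂ) * peP k (peU W) (peW W) h x = ∫ ξ, G W ξ := fun W => by
    rw [pe_inv (peP k (peU W) (peW W) h) x, ← integral_const_mul]
    refine integral_congr_ae (Filter.Eventually.of_forall fun ξ => ?_)
    simp only [peP_fourier]
    rfl
  have hGm : Measurable (Function.uncurry G) := by
    refine Measurable.mul ?_ (Measurable.mul ?_ (Measurable.mul ?_ ?_))
    · exact Complex.measurable_ofReal.comp ((peWt_meas α).comp measurable_fst)
    · fun_prop
    · exact Complex.measurable_ofReal.comp hmc.measurable
    · exact (𝓕 h).continuous.measurable.comp measurable_snd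
  have hGn : ∀ W ξ, ‖G W ξ‖ₑ = ENNReal.ofReal (peWt α W * m W ξ) * ‖𝓕 h ξ‖ₑ := fun W ξ => by
    have h1 : ‖cexp ((2 * π * inner ℝ ξ x : ℝ) * I)‖ₑ = 1 := by
      rw [← ofReal_norm, Complex.norm_exp_ofReal_mul_I]; simp
    simp only [G, enorm_mul, h1, one_mul]
    rw [← mul_assoc]
    congr 1
    rw [ENNReal.ofReal_mul (peWt_nonneg _ _)]
    congr 1
    · rw [← ofReal_norm, Complex.norm_real, Real.norm_of_nonneg (peWt_nonneg _ _)]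
    · rw [← ofReal_norm, Complex.norm_real, Real.norm_of_nonneg (hm0 _ _)]
  have hGi : Integrable (Function.uncurry G) (volume.prod volume) := by
    refine ⟨hGm.aestronglyMeasurable, ?_⟩
    rw [HasFiniteIntegral, lintegral_prod_symm _ hGm.enorm.aemeasurable]
    have h2 : ∀ ξ, ∫⁻ W, ‖Function.uncurry G (W, ξ)‖ₑ = Q * ‖𝓕 (peJ α h) ξ‖ₑ := fun ξ => by
      simp only [Function.uncurry_apply_pair, hGn]
      rw [lintegral_mul_const', hQe, peJ_fourier, enorm_mul]
      · rw [mul_comm _ Q, mul_assoc]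
        congr 2
        rw [← ofReal_norm, Complex.norm_real, Real.norm_of_nonneg (by positivity)]
      · simp
    simp only [h2]
    rw [lintegral_const_mul' _ _ hQf.ne]
    exact ENNReal.mul_lt_top hQf (𝓕 (peJ α h)).integrable.2
  have e1 : (fun W : Euc (n + 1) => (peWt α W : ℂ) * peP k (peU W) (peW W) h x) = fun W => ∫ ξ, G W ξ := funext hG
  rw [e1]
  refine ⟨hGi.integral_prod_left, ?_⟩
  rw [integral_integral_swap hGi, pe_inv (peJ α h) x, ← integral_const_mul]
  refine integral_congr_ae (Filter.Eventually.of_forall fun ξ => ?_)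
  have h3 : ∫ W, ((peWt α W * m W ξ : ℝ) : ℂ) = ((((1 + ‖ξ‖ ^ 2) ^ (α / 2)) * Q.toReal : ℝ) : ℂ) := by
    refine (integral_ofReal (𝕜 := ℂ) (μ := volume) (f := fun W => peWt α W * m W ξ)).trans ?_
    congr 1
    rw [integral_eq_lintegral_of_nonneg_ae, hQe, ENNReal.toReal_mul, ENNReal.toReal_ofReal (by positivity)]
    · rfl
    · exact Filter.Eventually.of_forall fun W => mul_nonneg (peWt_nonneg _ _) (hm0 _ _)
    · exact ((peWt_meas α).mul (hmc.measurable.comp (measurable_id.prodMk measurable_const))).aestronglyMeasurable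
  have h4 : ∀ W, G W ξ = ((peWt α W * m W ξ : ℝ) : ℂ) * (cexp ((2 * π * inner ℝ ξ x : ℝ) * I) * 𝓕 h ξ) := fun W => by
    simp only [G]; push_cast; ring
  simp only [h4]
  rw [integral_mul_const, h3, peJ_fourier]
  push_cast; ring

end rep


section alg
open scoped SchwartzMap NNReal
variable {n : ℕ}

/-- product of Schwartz functions -/
noncomputable def peM (a b : 𝓢(Euc n, ℂ)) : 𝓢(Euc n, ℂ) := SchwartzMap.pairing (ContinuousLinearMap.mul ℂ ℂ) a b

lemma peM_apply (a b : 𝓢(Euc n, ℂ)) (x : Euc n) : peM a b x = a x * b x := rfl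

/-- Lebesgue norm -/
noncomputable abbrev peN (q : ℝ≥0∞) (a : 𝓢(Euc n, ℂ)) : ℝ≥0∞ := eLpNorm a q volume

lemma peN_add {q : ℝ≥0∞} (hq : 1 ≤ q) (a b : 𝓢(Euc n, ℂ)) : peN q (a + b) ≤ peN q a + peN q b :=
  eLpNorm_add_le a.continuous.aestronglyMeasurable b.continuous.aestronglyMeasurable hq

lemma peN_sub {q : ℝ≥0∞} (hq : 1 ≤ q) (a b : 𝓢(Euc n, ℂ)) : peN q (a - b) ≤ peN q a + peN q b :=
  eLpNorm_sub_le a.continuous.aestronglyMeasurable b.continuous.aestronglyMeasurable hq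

lemma peN_smul {q : ℝ≥0∞} (c : ℂ) (a : 𝓢(Euc n, ℂ)) : peN q (c • a) = ‖c‖ₑ * peN q a :=
  eLpNorm_const_smul c (a : Euc n → ℂ) q volume

lemma peN_nsmul {q : ℝ≥0∞} (c : ℕ) (a : 𝓢(Euc n, ℂ)) : peN q (c • a) = c * peN q a := by
  have : c • a = (c : ℂ) • a := by ext x; simp
  rw [this, peN_smul]
  congr 1
  simp [enorm_eq_nnnorm]

lemma peN_zero {q : ℝ≥0∞} : peN q (0 : 𝓢(Euc n, ℂ)) = 0 := by
  simp [peN]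

lemma peN_sum {q : ℝ≥0∞} (hq : 1 ≤ q) (s : Finset ℕ) (a : ℕ → 𝓢(Euc n, ℂ)) :
    peN q (∑ i ∈ s, a i) ≤ ∑ i ∈ s, peN q (a i) :=
  Finset.le_sum_of_subadditive (fun a : 𝓢(Euc n, ℂ) => peN q a) peN_zero.le (fun a b => peN_add hq a b) s a

lemma peN_mul {p q r : ℝ≥0∞} [ENNReal.HolderTriple p q r] (a b : 𝓢(Euc n, ℂ)) :
    peN r (peM a b) ≤ peN p a * peN q b := by
  have h := eLpNorm_smul_le_mul_eLpNorm (p := p) (q := q) (r := r) (μ := volume)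
    (b.continuous.aestronglyMeasurable (μ := volume)) (a.continuous.aestronglyMeasurable (μ := volume))
  have e : (a : Euc n → ℂ) • (b : Euc n → ℂ) = ⇑(peM a b) := by
    ext x; rw [peM_apply]; rfl
  rw [e] at h
  exact h

lemma peS_pow_norm {q : ℝ≥0∞} {u : ℂ} (hu : ‖u‖ = 1) (w : Euc n) (m : ℕ) (f : 𝓢(Euc n, ℂ)) :
    peN q ((peS u w ^ m) f) = peN q f := by
  induction m with
  | zero => simp
  | succ m ih => rw [pow_succ', mul_apply_eq_comp, peN, peS_norm hu]; exact ih

lemma peS_pow_sub {q : ℝ≥0∞} (hq : 1 ≤ q) {u : ℂ} (hu : ‖u‖ = 1) (w : Euc n) (m : ℕ) (f : 𝓢(Euc n, ℂ)) :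
    peN q ((peS u w ^ m) f - f) ≤ m * peN q (peT u w f) := by
  induction m with
  | zero => simp [peN]
  | succ m ih =>
    have e : (peS u w ^ (m + 1)) f - f = ((peS u w ^ m) f - f) + (peS u w ^ m) (peT u w f) := by
      rw [pow_succ, mul_apply_eq_comp, peT_apply', map_sub]; abel
    rw [e]
    refine (peN_add hq _ _).trans ?_
    rw [peS_pow_norm hu]
    rw [Nat.cast_succ, add_mul, one_mul]
    exact add_le_add ih le_rfl

lemma peT_S (u : ℂ) (w : Euc n) (i : ℕ) (f : 𝓢(Euc n, ℂ)) :
    peT u w ((peS u w ^ i) f) = (peS u w ^ i) (peT u w f) := by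
  rw [peT_apply', peT_apply', map_sub, ← mul_apply_eq_comp, ← mul_apply_eq_comp, ← pow_succ, ← pow_succ']

lemma peT_M (u : ℂ) (w : Euc n) (a b : 𝓢(Euc n, ℂ)) :
    peT u w (peM a b) = peM (peT 1 w a) (peS u w b) + peM a (peT u w b) := by
  ext x
  simp only [peT_apply, peM_apply, peS_apply, add_apply]
  ring

/-- Leibniz term -/
noncomputable def peL (u : ℂ) (w : Euc n) (a b : 𝓢(Euc n, ℂ)) (i j : ℕ) : 𝓢(Euc n, ℂ) :=
  peM ((peT 1 w ^ i) a) ((peS u w ^ i) ((peT u w ^ j) b))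

lemma peT_L (u : ℂ) (w : Euc n) (a b : 𝓢(Euc n, ℂ)) (i j : ℕ) :
    peT u w (peL u w a b i j) = peL u w a b i (j + 1) + peL u w a b (i + 1) j := by
  rw [peL, peT_M, add_comm]
  congr 1
  · rw [peT_S, peL, pow_succ' (peT u w), mul_apply_eq_comp]
  · rw [peL, pow_succ' (peT 1 w), pow_succ' (peS u w), mul_apply_eq_comp, mul_apply_eq_comp]

lemma pe_leib (u : ℂ) (w : Euc n) (a b : 𝓢(Euc n, ℂ)) (M : ℕ) :
    (peT u w ^ M) (peM a b) = ∑ ij ∈ Finset.HasAntidiagonal.antidiagonal M, M.choose ij.1 • peL u w a b ij.1 ij.2 := by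
  induction M with
  | zero => simp [peL]
  | succ M ih =>
    rw [Finset.sum_antidiagonal_choose_succ_nsmul (peL u w a b) M, pow_succ', mul_apply_eq_comp, ih, map_sum]
    simp only [map_nsmul, peT_L, nsmul_add, Finset.sum_add_distrib]
    congr 1
    refine Finset.sum_congr rfl fun ij hij => ?_
    rw [Nat.choose_symm_of_eq_add (Finset.HasAntidiagonal.mem_antidiagonal.1 hij).symm]

lemma pe_leib' (u : ℂ) (w : Euc n) (a b : 𝓢(Euc n, ℂ)) (N : ℕ) :
    (peT u w ^ (N + 1)) (peM a b) = peM a ((peT u w ^ (N + 1)) b) + peM ((peT 1 w ^ (N + 1)) a) ((peS u w ^ (N + 1)) b)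
      + ∑ i ∈ Finset.range N, (N + 1).choose (i + 1) • peL u w a b (i + 1) (N - i) := by
  rw [pe_leib, Finset.Nat.sum_antidiagonal_eq_sum_range_succ (fun i j => (N + 1).choose i • peL u w a b i j),
    Finset.sum_range_succ, Finset.sum_range_succ']
  have e1 : (N + 1).choose 0 • peL u w a b 0 (N + 1 - 0) = peM a ((peT u w ^ (N + 1)) b) := by
    simp [peL]
  have e2 : (N + 1).choose (N + 1) • peL u w a b (N + 1) (N + 1 - (N + 1)) = peM ((peT 1 w ^ (N + 1)) a) ((peS u w ^ (N + 1)) b) := by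
    simp [peL]
  rw [e1, e2]
  have e3 : ∀ i, N + 1 - (i + 1) = N - i := fun i => by omega
  simp only [e3]
  abel

lemma peT_expand (u : ℂ) (w : Euc n) (a : 𝓢(Euc n, ℂ)) (M : ℕ) :
    (peT u w ^ M) a = ∑ i ∈ Finset.range M, (u ^ i * (u - 1) ^ (M - i) * (M.choose i : ℂ)) • (peT 1 w ^ i) a
      + u ^ M • (peT 1 w ^ M) a := by
  have e : peT u w = u • peT 1 w + (u - 1) • (1 : 𝓢(Euc n, ℂ) →L[ℂ] 𝓢(Euc n, ℂ)) := by
    ext f x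
    simp [peT_apply]
    ring
  have hc : Commute (u • peT 1 w) ((u - 1) • (1 : 𝓢(Euc n, ℂ) →L[ℂ] 𝓢(Euc n, ℂ))) :=
    (((Commute.one_right (peT 1 w)).smul_right (u - 1))).smul_left u
  rw [e, hc.add_pow, Finset.sum_range_succ]
  have e2 : ∀ i, (((u • peT 1 w) ^ i * ((u - 1) • (1 : 𝓢(Euc n, ℂ) →L[ℂ] 𝓢(Euc n, ℂ))) ^ (M - i) * (M.choose i : 𝓢(Euc n, ℂ) →L[ℂ] 𝓢(Euc n, ℂ))) : 𝓢(Euc n, ℂ) →L[ℂ] 𝓢(Euc n, ℂ)) = (u ^ i * (u - 1) ^ (M - i) * (M.choose i : ℂ)) • (peT 1 w ^ i) := fun i => by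
    rw [smul_pow, smul_pow, one_pow, mul_smul_comm, mul_one, smul_smul, ← nsmul_eq_mul', ← Nat.cast_smul_eq_nsmul ℂ, smul_smul]
    congr 1; ring
  simp only [e2]
  rw [add_apply, sum_apply]
  simp

lemma pe_upow {u : ℂ} (hu : ‖u‖ = 1) (k : ℕ) : ‖u ^ k - 1‖ ≤ k * ‖u - 1‖ := by
  induction k with
  | zero => simp
  | succ k ih =>
    have : u ^ (k + 1) - 1 = u * (u ^ k - 1) + (u - 1) := by ring
    rw [this]
    refine (norm_add_le _ _).trans ?_
    rw [norm_mul, hu, one_mul]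
    push_cast; linarith

end alg


section est
open scoped SchwartzMap NNReal
variable {n : ℕ}

/-- the commutator expression -/
noncomputable def peF (k M : ℕ) (u : ℂ) (w : Euc n) (a b : 𝓢(Euc n, ℂ)) : 𝓢(Euc n, ℂ) :=
  (peT u w ^ M) (peM a b) - peM ((peS 1 w ^ k) a) ((peT u w ^ M) b) - peM ((peS 1 w ^ k) b) ((peT u w ^ M) a)

lemma pe_bracket {p : ℝ≥0∞} (hp : 1 ≤ p) {u : ℂ} {w : Euc n} {ω : ℝ≥0} {M m0 : ℕ} {a b A : ℝ≥0∞} {φ : 𝓢(Euc n, ℂ)}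
    (hu : ‖u‖ = 1) (huω : ‖u - 1‖ ≤ 7 * ω) (hω1 : ω ≤ 1)
    (hab1 : (ω : ℝ≥0∞) * b ≤ a * b) (hab2 : ∀ j, m0 + 3 ≤ j → (ω : ℝ≥0∞) ^ j ≤ a * b)
    (hM : 2 * m0 + 2 ≤ M)
    (hφ2 : ∀ m, m0 ≤ m → m ≤ M → peN p ((peT 1 w ^ m) φ) ≤ b * A) (hφ3 : peN p φ ≤ A) :
    peN p ((peT u w ^ M) φ - (peT 1 w ^ M) φ) ≤ ((7 * M + M * 28 ^ M : ℕ) : ℝ≥0∞) * (a * b * A) := by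
  have huω' : ‖u - 1‖ₑ ≤ 7 * ω := by
    rw [enorm_eq_nnnorm]; exact_mod_cast huω
  have e : (peT u w ^ M) φ - (peT 1 w ^ M) φ = (u ^ M - 1) • (peT 1 w ^ M) φ +
      ∑ i ∈ Finset.range M, (u ^ i * (u - 1) ^ (M - i) * (M.choose i : ℂ)) • (peT 1 w ^ i) φ := by
    rw [peT_expand, sub_smul, one_smul]; abel
  rw [e]
  refine (peN_add hp _ _).trans ?_
  rw [show ((7 * M + M * 28 ^ M : ℕ) : ℝ≥0∞) = 7 * (M : ℝ≥0∞) + M * 28 ^ M by push_cast; ring, add_mul]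
  refine add_le_add ?_ ?_
  · rw [peN_smul]
    have h1 : ‖u ^ M - 1‖ₑ ≤ M * (7 * ω) := by
      rw [enorm_eq_nnnorm]
      have h2 := pe_upow hu M
      have h3 : ‖u ^ M - 1‖ ≤ M * (7 * ω) := h2.trans (by gcongr)
      exact_mod_cast h3
    calc ‖u ^ M - 1‖ₑ * peN p ((peT 1 w ^ M) φ) ≤ (M * (7 * ω)) * (b * A) :=
          mul_le_mul' h1 (hφ2 M (by omega) le_rfl)
      _ = 7 * M * (ω * b * A) := by ring
      _ ≤ 7 * M * (a * b * A) := by gcongr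
  · refine (peN_sum hp _ _).trans ?_
    have hterm : ∀ i ∈ Finset.range M, peN p ((u ^ i * (u - 1) ^ (M - i) * (M.choose i : ℂ)) • (peT 1 w ^ i) φ) ≤
        (28 : ℝ≥0∞) ^ M * (a * b * A) := by
      intro i hi
      have hi' : i < M := Finset.mem_range.1 hi
      rw [peN_smul, enorm_mul, enorm_mul, enorm_pow, enorm_pow]
      have hu1 : ‖u‖ₑ = 1 := by rw [← ofReal_norm, hu]; simp
      have hc : ‖(M.choose i : ℂ)‖ₑ ≤ 2 ^ M := by
        have : ‖(M.choose i : ℂ)‖ₑ = (M.choose i : ℝ≥0∞) := by simp [enorm_eq_nnnorm]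
        rw [this]
        exact_mod_cast Nat.choose_le_two_pow M i
      rw [hu1, one_pow, one_mul]
      have h7 : (‖u - 1‖ₑ) ^ (M - i) ≤ 7 ^ M * (ω : ℝ≥0∞) ^ (M - i) := by
        refine (pow_le_pow_left' huω' _).trans ?_
        rw [mul_pow]
        refine mul_le_mul' (pow_le_pow_right₀ (by norm_num) (by omega)) le_rfl
      have hX : (ω : ℝ≥0∞) ^ (M - i) * peN p ((peT 1 w ^ i) φ) ≤ 2 ^ M * (a * b * A) := by
        rcases le_or_gt m0 i with h | h
        · have hω : (ω : ℝ≥0∞) ^ (M - i) ≤ ω := by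
            have := pow_le_pow_of_le_one (a := (ω : ℝ≥0∞)) zero_le (by exact_mod_cast hω1) (show 1 ≤ M - i by omega)
            simpa using this
          calc (ω : ℝ≥0∞) ^ (M - i) * peN p ((peT 1 w ^ i) φ) ≤ ω * (b * A) := mul_le_mul' hω (hφ2 i h hi'.le)
            _ = 1 * (ω * b * A) := by ring
            _ ≤ 2 ^ M * (a * b * A) := by
                refine mul_le_mul' (one_le_pow₀ (by norm_num)) (mul_le_mul' hab1 le_rfl)
        · have h2 := peT_pow_norm hp (u := 1) (by simp) w i φ
          have h3 : ((2 ^ i : ℝ≥0) : ℝ≥0∞) ≤ 2 ^ M := by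
            push_cast
            exact pow_le_pow_right₀ (by norm_num) hi'.le
          calc (ω : ℝ≥0∞) ^ (M - i) * peN p ((peT 1 w ^ i) φ) ≤ (a * b) * (2 ^ M * A) :=
                mul_le_mul' (hab2 _ (by omega)) (h2.trans (mul_le_mul' h3 hφ3))
            _ = _ := by ring
      calc ‖u - 1‖ₑ ^ (M - i) * ‖(M.choose i : ℂ)‖ₑ * peN p ((peT 1 w ^ i) φ)
          ≤ (7 ^ M * (ω : ℝ≥0∞) ^ (M - i)) * 2 ^ M * peN p ((peT 1 w ^ i) φ) :=
            mul_le_mul' (mul_le_mul' h7 hc) le_rfl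
        _ = 7 ^ M * 2 ^ M * ((ω : ℝ≥0∞) ^ (M - i) * peN p ((peT 1 w ^ i) φ)) := by ring
        _ ≤ 7 ^ M * 2 ^ M * (2 ^ M * (a * b * A)) := mul_le_mul' le_rfl hX
        _ = (7 * 2 * 2) ^ M * (a * b * A) := by rw [mul_pow, mul_pow]; ring
        _ = 28 ^ M * (a * b * A) := by norm_num
    refine (Finset.sum_le_sum hterm).trans (le_of_eq ?_)
    rw [Finset.sum_const, Finset.card_range, nsmul_eq_mul]; ring

lemma pe_F_est {p s r : ℝ≥0∞} [ENNReal.HolderTriple p s r] (hp : 1 ≤ p) (hs : 1 ≤ s) (hr : 1 ≤ r)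
    {u : ℂ} {w : Euc n} {ω : ℝ≥0} {k N m0 : ℕ} {a b A B : ℝ≥0∞} {φ ψ : 𝓢(Euc n, ℂ)}
    (hu : ‖u‖ = 1) (huω : ‖u - 1‖ ≤ 7 * ω) (hω1 : ω ≤ 1)
    (hab1 : (ω : ℝ≥0∞) * b ≤ a * b) (hab2 : ∀ j, m0 + 3 ≤ j → (ω : ℝ≥0∞) ^ j ≤ a * b)
    (hM : 2 * m0 + 2 ≤ N + 1)
    (hφ1 : peN ∞ (peT 1 w φ) ≤ a * A)
    (hφ2 : ∀ m, m0 ≤ m → m ≤ N + 1 → peN p ((peT 1 w ^ m) φ) ≤ b * A) (hφ3 : peN p φ ≤ A)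
    (hψ1 : peN s (peT u w ψ) ≤ a * B) (hψ1' : peN s (peT 1 w ψ) ≤ a * B)
    (hψ2 : ∀ m, m0 ≤ m → m ≤ N + 1 → peN r ((peT u w ^ m) ψ) ≤ b * B) (hψ3 : peN s ψ ≤ B) :
    peN r (peF k (N + 1) u w φ ψ) ≤
      ((k + (N + 1) + k + (7 * (N + 1) + (N + 1) * 28 ^ (N + 1)) + N * 4 ^ (N + 1) : ℕ) : ℝ≥0∞) * (a * b * A * B) := by
  have e : peF k (N + 1) u w φ ψ =
      ((peM (φ - (peS 1 w ^ k) φ) ((peT u w ^ (N + 1)) ψ)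
      + peM ((peT 1 w ^ (N + 1)) φ) ((peS u w ^ (N + 1)) ψ - ψ))
      - peM ((peT 1 w ^ (N + 1)) φ) ((peS 1 w ^ k) ψ - ψ)
      - peM ((peS 1 w ^ k) ψ) ((peT u w ^ (N + 1)) φ - (peT 1 w ^ (N + 1)) φ))
      + ∑ i ∈ Finset.range N, (N + 1).choose (i + 1) • peL u w φ ψ (i + 1) (N - i) := by
    rw [peF, pe_leib']
    ext x
    simp only [sub_apply, add_apply, peM_apply]
    ring
  have h1u : ‖(1 : ℂ)‖ = 1 := by simp
  rw [e]
  refine (peN_add hr _ _).trans ?_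
  rw [Nat.cast_add _ (N * 4 ^ (N + 1)), add_mul]
  refine add_le_add ?_ ?_
  · refine (peN_sub hr _ _).trans ?_
    rw [Nat.cast_add _ (7 * (N + 1) + (N + 1) * 28 ^ (N + 1)), add_mul]
    refine add_le_add ?_ ?_
    · refine (peN_sub hr _ _).trans ?_
      rw [Nat.cast_add _ k, add_mul]
      refine add_le_add ?_ ?_
      · refine (peN_add hr _ _).trans ?_
        rw [Nat.cast_add _ (N + 1), add_mul]
        refine add_le_add ?_ ?_
        · refine (peN_mul (p := ∞) (q := r) _ _).trans ?_
          have h1 : peN ∞ (φ - (peS 1 w ^ k) φ) ≤ k * (a * A) := by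
            have h2 : peN ∞ (φ - (peS 1 w ^ k) φ) = peN ∞ ((peS 1 w ^ k) φ - φ) := by
              have : φ - (peS 1 w ^ k) φ = -((peS 1 w ^ k) φ - φ) := by abel
              rw [this]
              exact eLpNorm_neg _ _ _
            rw [h2]
            exact (peS_pow_sub le_top h1u w k φ).trans (mul_le_mul' le_rfl hφ1)
          refine (mul_le_mul' h1 (hψ2 (N + 1) (by omega) le_rfl)).trans (le_of_eq ?_)
          ring
        · refine (peN_mul (p := p) (q := s) _ _).trans ?_
          refine (mul_le_mul' (hφ2 (N + 1) (by omega) le_rfl)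
            ((peS_pow_sub hs hu w (N + 1) ψ).trans (mul_le_mul' le_rfl hψ1))).trans (le_of_eq ?_)
          ring
      · refine (peN_mul (p := p) (q := s) _ _).trans ?_
        refine (mul_le_mul' (hφ2 (N + 1) (by omega) le_rfl)
          ((peS_pow_sub hs h1u w k ψ).trans (mul_le_mul' le_rfl hψ1'))).trans (le_of_eq ?_)
        ring
    · have : ENNReal.HolderTriple s p r := ENNReal.HolderTriple.symm
      refine (peN_mul (p := s) (q := p) _ _).trans ?_
      rw [peS_pow_norm h1u]
      refine (mul_le_mul' hψ3 (pe_bracket hp hu huω hω1 hab1 hab2 hM hφ2 hφ3)).trans (le_of_eq ?_)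
      ring
  · refine (peN_sum hr _ _).trans ?_
    have hterm : ∀ i ∈ Finset.range N, peN r ((N + 1).choose (i + 1) • peL u w φ ψ (i + 1) (N - i)) ≤
        (4 : ℝ≥0∞) ^ (N + 1) * (a * b * A * B) := by
      intro i hi
      have hi' : i < N := Finset.mem_range.1 hi
      have hc : ((N + 1).choose (i + 1) : ℝ≥0∞) ≤ 2 ^ (N + 1) := by
        exact_mod_cast Nat.choose_le_two_pow (N + 1) (i + 1)
      rw [peN_nsmul]
      have hX : peN r (peL u w φ ψ (i + 1) (N - i)) ≤ 2 ^ (N + 1) * (a * b * A * B) := by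
        rcases le_or_gt m0 (i + 1) with h | h
        · refine (peN_mul (p := p) (q := s) _ _).trans ?_
          rw [peS_pow_norm hu]
          obtain ⟨j, hj⟩ : ∃ j, N - i = j + 1 := ⟨N - i - 1, by omega⟩
          have h2 : peN s ((peT u w ^ (N - i)) ψ) ≤ 2 ^ (N + 1) * (a * B) := by
            rw [hj, pow_succ, mul_apply_eq_comp]
            refine (peT_pow_norm hs hu w j _).trans (mul_le_mul' ?_ hψ1)
            push_cast
            exact pow_le_pow_right₀ (by norm_num) (by omega)
          refine (mul_le_mul' (hφ2 (i + 1) h (by omega)) h2).trans (le_of_eq ?_)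
          ring
        · refine (peN_mul (p := ∞) (q := r) _ _).trans ?_
          rw [peS_pow_norm hu]
          have h2 : peN ∞ ((peT 1 w ^ (i + 1)) φ) ≤ 2 ^ (N + 1) * (a * A) := by
            rw [pow_succ, mul_apply_eq_comp]
            refine (peT_pow_norm le_top h1u w i _).trans (mul_le_mul' ?_ hφ1)
            push_cast
            exact pow_le_pow_right₀ (by norm_num) (by omega)
          refine (mul_le_mul' h2 (hψ2 (N - i) (by omega) (by omega))).trans (le_of_eq ?_)
          ring
      refine (mul_le_mul' hc hX).trans (le_of_eq ?_)
      rw [← mul_assoc, ← mul_pow]; norm_num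
    refine (Finset.sum_le_sum hterm).trans (le_of_eq ?_)
    rw [Finset.sum_const, Finset.card_range, nsmul_eq_mul]; push_cast; ring

lemma peS_inv_M (u : ℂ) (w : Euc n) (k : ℕ) (a b : 𝓢(Euc n, ℂ)) :
    (peS u⁻¹ (-w) ^ k) (peM ((peS 1 w ^ k) a) b) = peM a ((peS u⁻¹ (-w) ^ k) b) := by
  ext x
  simp only [peM_apply, peS_pow_apply]
  rw [show x + k • -w + k • w = x by simp]
  ring

lemma peP_F (k : ℕ) (u : ℂ) (w : Euc n) (a b : 𝓢(Euc n, ℂ)) :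
    peP k u w (peM a b) - peM a (peP k u w b) - peM b (peP k u w a) =
      ((-1 : ℂ) ^ k) • (peS u⁻¹ (-w) ^ k) (peF k (2 * k) u w a b) := by
  rw [peF, map_sub, map_sub, peS_inv_M, peS_inv_M]
  ext x
  simp only [peP, sub_apply, smul_apply, peM_apply, smul_eq_mul]
  ring

lemma peP_N {q : ℝ≥0∞} (k : ℕ) {u : ℂ} (hu : ‖u‖ = 1) (w : Euc n) (a b : 𝓢(Euc n, ℂ)) :
    peN q (peP k u w (peM a b) - peM a (peP k u w b) - peM b (peP k u w a)) = peN q (peF k (2 * k) u w a b) := by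
  rw [peP_F, peN_smul, peS_pow_norm (by rw [norm_inv, hu, inv_one])]
  have : ‖((-1 : ℂ) ^ k)‖ₑ = 1 := by rw [enorm_pow]; simp
  rw [this, one_mul]

end est


section fin1
open scoped SchwartzMap NNReal
variable {n : ℕ}

lemma pe_split {α' η ε : ℝ} (hα' : 0 < α') (hε : 0 < ε) (hε1 : ε ≤ 1) (hη : ε < η) {q : ℝ} (hq : 1 ≤ q) {q2 : ℝ≥0∞}
    (hX : ∃ C : ℝ≥0, ∀ f : 𝓢(Euc n, ℂ), peN q2 (peJ (-α') f) ≤ C * peN (ENNReal.ofReal q) f) :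
    ∃ C : ℝ≥0, ∀ (f : 𝓢(Euc n, ℂ)) (u : ℂ) (w : Euc n) (ω : ℝ≥0), peOK u w ω →
      peN q2 (peT u w (peJ (-(α' + η)) f)) ≤ ((ω ^ ε : ℝ≥0) : ℝ≥0∞) * (C * peN (ENNReal.ofReal q) f) := by
  obtain ⟨C1, h1⟩ := hX
  obtain ⟨C2, h2⟩ := pe_F1 (n := n) hε hε1 hη
  refine ⟨C1 * C2, fun f u w ω h => ?_⟩
  have e : peJ (-(α' + η)) f = peJ (-α') (peJ (-η) f) := by rw [peJ_peJ]; congr 2; ring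
  rw [e, ← peJ_T hα']
  refine (h1 _).trans ((mul_le_mul' le_rfl (h2 q hq f u w ω h)).trans (le_of_eq ?_))
  push_cast; ring

lemma pe_Tm {α δ : ℝ} (hδ : 0 < δ) (hδα : δ < α) {m0 : ℕ} (hm0 : α ≤ m0) (M : ℕ) :
    ∃ C : ℝ≥0, ∀ q : ℝ, 1 ≤ q → ∀ (f : 𝓢(Euc n, ℂ)) (u : ℂ) (w : Euc n) (ω : ℝ≥0), ‖u‖ = 1 → peOK u w ω →
      ∀ m, m0 ≤ m → m ≤ M → peN (ENNReal.ofReal q) ((peT u w ^ m) (peJ (-α) f)) ≤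
        ((ω ^ (α - δ) : ℝ≥0) : ℝ≥0∞) * (C * peN (ENNReal.ofReal q) f) := by
  have hα : 0 < α := hδ.trans hδα
  have hm : (0 : ℝ) < m0 := hα.trans_le hm0
  obtain ⟨C, hC⟩ := pe_F1_pow (n := n) (β := α / m0) (σ := (α - δ) / m0) (div_pos (by linarith) hm)
    ((div_le_one hm).2 (by linarith)) (by gcongr; linarith) m0
  refine ⟨2 ^ M * C, fun q hq f u w ω hu h m hm1 hm2 => ?_⟩
  obtain ⟨j, rfl⟩ := Nat.exists_eq_add_of_le' hm1
  rw [pow_add, mul_apply_eq_comp]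
  refine (peT_pow_norm (by simpa using hq) hu w j _).trans ?_
  have h2 := hC q hq f u w ω h
  rw [show (m0 : ℝ) * (α / m0) = α by field_simp, show (m0 : ℝ) * ((α - δ) / m0) = α - δ by field_simp] at h2
  have h3 : ((2 ^ j : ℝ≥0) : ℝ≥0∞) ≤ 2 ^ M := by
    push_cast
    exact pow_le_pow_right₀ (by norm_num) (by omega)
  refine (mul_le_mul' h3 h2).trans (le_of_eq ?_)
  push_cast; ring

lemma pe_E {p r s α : ℝ} (hp : 1 ≤ p) (hr : 1 ≤ r) (hs : 1 ≤ s) (hrp : r.HolderConjugate p)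
    (h1 : 1 / s + 2 / p = 1) (h2 : 1 / r = 1 / s + 1 / p) (hα : (n : ℝ) / p < α)
    (hT : ENNReal.HolderTriple (ENNReal.ofReal p) (ENNReal.ofReal s) (ENNReal.ofReal r)) :
    ∃ (γ : ℝ) (k : ℕ) (C : ℝ≥0), α < γ ∧ α < 2 * k ∧ ∀ (f g : 𝓢(Euc n, ℂ)) (W : Euc (n + 1)),
      peN (ENNReal.ofReal r) (peP k (peU W) (peW W) (peM (peJ (-α) f) (peJ (-α) g)) -
        peM (peJ (-α) f) (peP k (peU W) (peW W) (peJ (-α) g)) - peM (peJ (-α) g) (peP k (peU W) (peW W) (peJ (-α) f))) ≤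
        ((peOm W ^ γ : ℝ≥0) : ℝ≥0∞) * (C * peN (ENNReal.ofReal p) f * peN (ENNReal.ofReal r) g) := by
  have hnp : 0 ≤ (n : ℝ) / p := by positivity
  have hα0 : 0 < α := hnp.trans_lt hα
  set d := α - (n : ℝ) / p with hd
  have hd0 : 0 < d := by linarith
  set ε := min (d / 3) 1 with hε
  have hε0 : 0 < ε := lt_min (by linarith) one_pos
  have hε1 : ε ≤ 1 := min_le_right _ _
  have hεd : ε ≤ d / 3 := min_le_left _ _
  have hη : ε < d / 2 := by linarith
  have hα' : (n : ℝ) / p < α - d / 2 := by linarith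
  have hα'0 : 0 < α - d / 2 := by linarith
  set δ := ε / 2 with hδ
  have hδ0 : 0 < δ := by positivity
  have hδα : δ < α := by linarith
  set m0 := ⌈α⌉₊ with hm0
  have hm0α : α ≤ m0 := Nat.le_ceil α
  obtain ⟨Ci, hCi⟩ := pe_split (n := n) hα'0 hε0 hε1 hη hp (pe_Finf hrp hα'0 hα')
  obtain ⟨Cs, hCs⟩ := pe_split (n := n) hα'0 hε0 hε1 hη hr (pe_Fs (by linarith) hr (by linarith) h1 h2 hα'0 hα')
  obtain ⟨Cm, hCm⟩ := pe_Tm (n := n) hδ0 hδα hm0α (2 * m0 + 2)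
  obtain ⟨C0, hC0⟩ := pe_F0 (n := n) hα0
  obtain ⟨Ct, hCt⟩ := pe_Fs (n := n) (by linarith) hr (by linarith) h1 h2 hα0 hα
  rw [sub_add_cancel] at hCi hCs
  set K : ℝ≥0 := Ci + Cs + Cm + C0 + Ct with hK
  have hKi : (Ci : ℝ≥0∞) ≤ K := by
    exact_mod_cast (by rw [hK, add_assoc, add_assoc, add_assoc]; exact le_self_add : Ci ≤ K)
  have hKs : (Cs : ℝ≥0∞) ≤ K := by
    exact_mod_cast (by rw [hK, add_comm Ci, add_assoc, add_assoc, add_assoc]; exact le_self_add : Cs ≤ K)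
  have hKm : (Cm : ℝ≥0∞) ≤ K := by
    exact_mod_cast (by rw [hK, add_comm (Ci + Cs), add_assoc, add_assoc]; exact le_self_add : Cm ≤ K)
  have hK0 : (C0 : ℝ≥0∞) ≤ K := by
    exact_mod_cast (by rw [hK, add_comm (Ci + Cs + Cm), add_assoc]; exact le_self_add : C0 ≤ K)
  have hKt : (Ct : ℝ≥0∞) ≤ K := by
    exact_mod_cast (by rw [hK]; exact le_add_self : Ct ≤ K)
  set D : ℕ := ((m0 + 1) + ((2 * m0 + 1) + 1) + (m0 + 1) + (7 * ((2 * m0 + 1) + 1) + ((2 * m0 + 1) + 1) * 28 ^ ((2 * m0 + 1) + 1)) + (2 * m0 + 1) * 4 ^ ((2 * m0 + 1) + 1)) with hD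
  refine ⟨ε + (α - δ), m0 + 1, D * K * K, by linarith, by push_cast; linarith, fun f g W => ?_⟩
  rw [peP_N _ (peU_norm W)]
  set ω := peOm W with hω
  have hω1 : ω ≤ 1 := (peOK_W W).1
  have hpE : 1 ≤ ENNReal.ofReal p := by simpa using hp
  have hsE : 1 ≤ ENNReal.ofReal s := by simpa using hs
  have hrE : 1 ≤ ENNReal.ofReal r := by simpa using hr
  have h1u : ‖(1 : ℂ)‖ = 1 := by simp
  have key := pe_F_est (n := n) hpE hsE hrE (u := peU W) (w := peW W) (ω := ω) (k := m0 + 1) (N := 2 * m0 + 1) (m0 := m0)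
    (a := ((ω ^ ε : ℝ≥0) : ℝ≥0∞)) (b := ((ω ^ (α - δ) : ℝ≥0) : ℝ≥0∞))
    (A := K * peN (ENNReal.ofReal p) f) (B := K * peN (ENNReal.ofReal r) g)
    (φ := peJ (-α) f) (ψ := peJ (-α) g) (peU_norm W) (peOK_W W).2.1 hω1 ?_ ?_ (by omega)
    ((hCi f 1 _ ω (peOK_W1 W)).trans (mul_le_mul' le_rfl (mul_le_mul' hKi le_rfl)))
    (fun m hm hm' => (hCm p hp f 1 _ ω h1u (peOK_W1 W) m hm (by omega)).trans (mul_le_mul' le_rfl (mul_le_mul' hKm le_rfl)))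
    ((hC0 p hp f).trans (mul_le_mul' hK0 le_rfl))
    ((hCs g _ _ ω (peOK_W W)).trans (mul_le_mul' le_rfl (mul_le_mul' hKs le_rfl)))
    ((hCs g 1 _ ω (peOK_W1 W)).trans (mul_le_mul' le_rfl (mul_le_mul' hKs le_rfl)))
    (fun m hm hm' => (hCm r hr g _ _ ω (peU_norm W) (peOK_W W) m hm (by omega)).trans (mul_le_mul' le_rfl (mul_le_mul' hKm le_rfl)))
    ((hCt g).trans (mul_le_mul' hKt le_rfl))
  · rw [show 2 * (m0 + 1) = 2 * m0 + 1 + 1 by ring]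
    refine key.trans (le_of_eq ?_)
    rw [← hD, NNReal.rpow_add_of_nonneg _ hε0.le (by linarith)]
    push_cast
    ring
  · refine mul_le_mul' ?_ le_rfl
    have : ω ≤ ω ^ ε := by
      have h3 : (ω : ℝ) ^ (1 : ℝ) ≤ (ω : ℝ) ^ ε :=
        Real.rpow_le_rpow_of_exponent_ge' ω.2 (by exact_mod_cast hω1) hε0.le hε1
      rw [Real.rpow_one] at h3
      exact_mod_cast h3
    exact_mod_cast this
  · intro j hj
    have : ω ^ j ≤ ω ^ ε * ω ^ (α - δ) := by
      rw [← NNReal.rpow_add_of_nonneg _ hε0.le (by linarith), ← NNReal.rpow_natCast]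
      have hj' : ((m0 : ℝ) + 3) ≤ j := by exact_mod_cast hj
      have h3 : (ω : ℝ) ^ (j : ℝ) ≤ (ω : ℝ) ^ (ε + (α - δ)) :=
        Real.rpow_le_rpow_of_exponent_ge' ω.2 (by exact_mod_cast hω1) (by linarith) (by linarith)
      exact_mod_cast h3
    exact_mod_cast this

end fin1


section fin2
open scoped SchwartzMap NNReal
variable {n : ℕ}

lemma peN_fin (q : ℝ≥0∞) (f : 𝓢(Euc n, ℂ)) : peN q f < ⊤ := (f.memLp q volume).2

lemma peN_zero_iff {q : ℝ≥0∞} (hq : q ≠ 0) {f : 𝓢(Euc n, ℂ)} (h : peN q f = 0) (x : Euc n) : f x = 0 := by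
  have h1 := (eLpNorm_eq_zero_iff f.continuous.aestronglyMeasurable hq).1 h
  have h2 := (Continuous.ae_eq_iff_eq (μ := volume) f.continuous continuous_zero).1 h1
  rw [h2]; rfl

lemma pe_pow_N {q : ℝ} (hq : 0 < q) (f : 𝓢(Euc n, ℂ)) : ∫⁻ x, ‖f x‖ₑ ^ q = peN (ENNReal.ofReal q) f ^ q := by
  rw [peN, pe_eLp hq, ← ENNReal.rpow_mul, one_div, inv_mul_cancel₀ hq.ne', ENNReal.rpow_one]

lemma pe_final {p r s α : ℝ} (hp : 1 ≤ p) (hr : 1 ≤ r) (hs : 1 ≤ s) (hrp : r.HolderConjugate p)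
    (h1 : 1 / s + 2 / p = 1) (h2 : 1 / r = 1 / s + 1 / p) (hα0 : 0 < α) (hα : (n : ℝ) / p < α)
    (hT : ENNReal.HolderTriple (ENNReal.ofReal p) (ENNReal.ofReal s) (ENNReal.ofReal r)) :
    ∃ C : ℝ≥0, ∀ f g : 𝓢(Euc n, ℂ), peN (ENNReal.ofReal r) (peJ α (peM (peJ (-α) f) (peJ (-α) g))) ≤
      C * peN (ENNReal.ofReal p) f * peN (ENNReal.ofReal r) g := by
  obtain ⟨γ, k, C, hγ, hk, hE⟩ := pe_E (n := n) hp hr hs hrp h1 h2 hα hT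
  obtain ⟨c, hc, hrep⟩ := pe_rep (n := n) k hα0 hk
  obtain ⟨Ci, hCi⟩ := pe_Finf (n := n) hrp hα0 hα
  obtain ⟨Ct, hCt⟩ := pe_Fs (n := n) (by linarith) hr (by linarith) h1 h2 hα0 hα
  have hI := pe_wfin (n := n) hα0 hγ
  set Iγ := ∫⁻ W : Euc (n + 1), ENNReal.ofReal ((peOm W : ℝ) ^ γ * peWt α W) with hIγ
  have hr0 : 0 < r := by linarith
  have hrE : 1 ≤ ENNReal.ofReal r := by simpa using hr
  have hrE0 : ENNReal.ofReal r ≠ 0 := (lt_of_lt_of_le one_pos hrE).ne'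
  refine ⟨c.toNNReal⁻¹ * (Iγ.toNNReal * C) + Ci + Ct, fun f g => ?_⟩
  set φ := peJ (-α) f with hφ
  set ψ := peJ (-α) g with hψ
  have hJf : peJ α φ = f := by rw [hφ, peJ_peJ, add_neg_cancel, peJ_zero]
  have hJg : peJ α ψ = g := by rw [hψ, peJ_peJ, add_neg_cancel, peJ_zero]
  set A := peN (ENNReal.ofReal p) f with hA
  set B := peN (ENNReal.ofReal r) g with hB
  set D : 𝓢(Euc n, ℂ) := peJ α (peM φ ψ) - peM φ g - peM ψ f with hD
  let E : Euc (n + 1) → 𝓢(Euc n, ℂ) := fun W => peP k (peU W) (peW W) (peM φ ψ) -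
        peM φ (peP k (peU W) (peW W) ψ) - peM ψ (peP k (peU W) (peW W) φ)
  have hEx : ∀ W x, E W x = peP k (peU W) (peW W) (peM φ ψ) x - φ x * peP k (peU W) (peW W) ψ x
      - ψ x * peP k (peU W) (peW W) φ x := fun W x => rfl
  have hEW : ∀ W, peN (ENNReal.ofReal r) (E W) ≤ ((peOm W ^ γ : ℝ≥0) : ℝ≥0∞) * (C * A * B) := fun W => hE f g W
  have hDint : ∀ x, (c : ℂ) * D x = ∫ W, (peWt α W : ℂ) * E W x := fun x => by
    obtain ⟨i1, j1⟩ := hrep (peM φ ψ) x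
    obtain ⟨i2, j2⟩ := hrep ψ x
    obtain ⟨i3, j3⟩ := hrep φ x
    have e : ∀ W, (peWt α W : ℂ) * E W x = (peWt α W : ℂ) * peP k (peU W) (peW W) (peM φ ψ) x
        - φ x * ((peWt α W : ℂ) * peP k (peU W) (peW W) ψ x) - ψ x * ((peWt α W : ℂ) * peP k (peU W) (peW W) φ x) :=
      fun W => by rw [hEx]; ring
    simp only [e]
    have i12 : Integrable (fun W => (peWt α W : ℂ) * peP k (peU W) (peW W) (peM φ ψ) x
        - φ x * ((peWt α W : ℂ) * peP k (peU W) (peW W) ψ x)) := i1.sub (i2.const_mul _)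
    rw [integral_sub i12 (i3.const_mul _), integral_sub i1 (i2.const_mul _),
      integral_const_mul, integral_const_mul, j1, j2, j3, hJf, hJg, hD]
    simp only [sub_apply, peM_apply]
    ring
  let F : Euc n → Euc (n + 1) → ℝ≥0∞ := fun x W => ENNReal.ofReal (peWt α W) * ‖E W x‖ₑ
  let G : Euc (n + 1) → ℝ≥0∞ := fun W => ENNReal.ofReal ((peOm W : ℝ) ^ γ * peWt α W) * (C * A * B)
  have hCAB : (C * A * B : ℝ≥0∞) ≠ ⊤ := ENNReal.mul_ne_top (ENNReal.mul_ne_top ENNReal.coe_ne_top (peN_fin _ f).ne) (peN_fin _ g).ne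
  have hOm : Measurable (fun W : Euc (n + 1) => (peOm W : ℝ)) := by unfold peOm; fun_prop
  have hGO : ∀ W : Euc (n + 1), ENNReal.ofReal ((peOm W : ℝ) ^ γ * peWt α W) = ENNReal.ofReal (peWt α W) * ((peOm W ^ γ : ℝ≥0) : ℝ≥0∞) := fun W => by
    rw [mul_comm, ENNReal.ofReal_mul (peWt_nonneg _ _)]
    congr 1
    rw [← NNReal.coe_rpow, ENNReal.ofReal_coe_nnreal]
  have hEc : Continuous (fun z : Euc n × Euc (n + 1) => E z.2 z.1) := by
    simp only [hEx]
    exact ((peP_cont k (peM φ ψ)).sub ((φ.continuous.comp continuous_fst).mul (peP_cont k ψ))).sub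
      ((ψ.continuous.comp continuous_fst).mul (peP_cont k φ))
  have hmink := pe_mink (q := r) (F := F) (g := G) (volume : Measure (Euc n)) (volume : Measure (Euc (n + 1))) hr ?_ ?_ ?_ ?_ ?_
  · have hDN : peN (ENNReal.ofReal r) ((c : ℂ) • D) ≤ Iγ * (C * A * B) := by
      have h3 : ∫⁻ x, ‖((c : ℂ) • D) x‖ₑ ^ r ≤ (Iγ * (C * A * B)) ^ r := by
        refine le_trans (lintegral_mono fun x => ?_) (hmink.trans (le_of_eq ?_))
        · refine ENNReal.rpow_le_rpow ?_ hr0.le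
          rw [smul_apply, smul_eq_mul, hDint x]
          refine (enorm_integral_le_lintegral_enorm _).trans (le_of_eq ?_)
          refine lintegral_congr fun W => ?_
          rw [enorm_mul, ← ofReal_norm (peWt α W : ℂ), Complex.norm_real, Real.norm_of_nonneg (peWt_nonneg _ _)]
        · rw [lintegral_mul_const' _ _ hCAB]
      rw [pe_pow_N hr0] at h3
      exact (ENNReal.rpow_le_rpow_iff hr0).1 h3
    rw [peN_smul] at hDN
    have hcE : ‖(c : ℂ)‖ₑ = (c.toNNReal : ℝ≥0∞) := by
      rw [← ofReal_norm, Complex.norm_real, Real.norm_of_nonneg hc.le]; rfl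
    set c' : ℝ≥0 := c.toNNReal with hc'
    have hc0 : c' ≠ 0 := (Real.toNNReal_pos.2 hc).ne'
    have hDN2 : peN (ENNReal.ofReal r) D ≤ ((c'⁻¹ : ℝ≥0) : ℝ≥0∞) * (Iγ * (C * A * B)) := by
      calc peN (ENNReal.ofReal r) D = ((c'⁻¹ * c' : ℝ≥0) : ℝ≥0∞) * peN (ENNReal.ofReal r) D := by
            rw [inv_mul_cancel₀ hc0]; simp
        _ = ((c'⁻¹ : ℝ≥0) : ℝ≥0∞) * (‖(c : ℂ)‖ₑ * peN (ENNReal.ofReal r) D) := by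
            rw [hcE]; push_cast; ring
        _ ≤ _ := mul_le_mul' le_rfl hDN
    have eD : peJ α (peM φ ψ) = (D + peM φ g) + peM ψ f := by rw [hD]; abel
    rw [eD]
    refine (peN_add hrE _ _).trans ((add_le_add (peN_add hrE _ _) le_rfl).trans ?_)
    have hT' : ENNReal.HolderTriple (ENNReal.ofReal s) (ENNReal.ofReal p) (ENNReal.ofReal r) := ENNReal.HolderTriple.symm
    have t1 : peN (ENNReal.ofReal r) (peM φ g) ≤ Ci * A * B :=
      (peN_mul (p := ∞) (q := ENNReal.ofReal r) _ _).trans (mul_le_mul' (hCi f) le_rfl)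
    have t2 : peN (ENNReal.ofReal r) (peM ψ f) ≤ Ct * B * A :=
      (peN_mul (p := ENNReal.ofReal s) (q := ENNReal.ofReal p) _ _).trans (mul_le_mul' (hCt g) le_rfl)
    refine (add_le_add (add_le_add hDN2 t1) t2).trans (le_of_eq ?_)
    generalize c'⁻¹ = d
    rw [ENNReal.coe_add, ENNReal.coe_add, ENNReal.coe_mul, ENNReal.coe_mul, ENNReal.coe_toNNReal hI.ne]
    ring
  · have m1 : Measurable (fun z : Euc n × Euc (n + 1) => ENNReal.ofReal (peWt α z.2)) :=
      ENNReal.measurable_ofReal.comp ((peWt_meas α).comp measurable_snd)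
    exact m1.mul hEc.measurable.enorm
  · refine Measurable.mul_const ?_ _
    exact ENNReal.measurable_ofReal.comp ((hOm.pow_const γ).mul (peWt_meas α))
  · exact fun W => ENNReal.mul_ne_top ENNReal.ofReal_ne_top hCAB
  · intro x W hW
    rcases mul_eq_zero.1 hW with h | h
    · rw [hGO] at h
      rcases mul_eq_zero.1 h with h | h
      · simp only [F]; rw [h, zero_mul]
      · have h5 : peN (ENNReal.ofReal r) (E W) = 0 := le_antisymm ((hEW W).trans (by rw [h, zero_mul])) zero_le
        simp only [F]; rw [peN_zero_iff hrE0 h5 x]; simp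
    · have h5 : peN (ENNReal.ofReal r) (E W) = 0 := le_antisymm ((hEW W).trans (by rw [h, mul_zero])) zero_le
      simp only [F]; rw [peN_zero_iff hrE0 h5 x]; simp
  · intro W
    simp only [F, G, ENNReal.mul_rpow_of_nonneg _ _ hr0.le]
    rw [lintegral_const_mul' _ _ (ENNReal.rpow_ne_top_of_nonneg hr0.le ENNReal.ofReal_ne_top), pe_pow_N hr0,
      ← ENNReal.mul_rpow_of_nonneg _ _ hr0.le]
    rw [← ENNReal.mul_rpow_of_nonneg _ _ hr0.le, ← ENNReal.mul_rpow_of_nonneg _ _ hr0.le, ← ENNReal.mul_rpow_of_nonneg _ _ hr0.le]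
    refine ENNReal.rpow_le_rpow ?_ hr0.le
    rw [hGO, mul_assoc]
    exact mul_le_mul' le_rfl (hEW W)

end fin2


/-- For `1<p<∞` with `p' ≤ p`, `0 < α < n/p'` and `p > n/α`:
`‖φψ‖_{H^α_{p'}} ≤ C‖φ‖_{H^α_p}‖ψ‖_{H^α_{p'}}` for all test functions. -/
theorem product_estimate_small_alpha {n : ℕ} (p α : ℝ) (hp1 : 1 < p)
    (hpp : conjExp p ≤ p) (hα0 : 0 < α) (hα : α < (n : ℝ) / conjExp p)
    (hpα : (n : ℝ) / α < p) :
    ∃ C : ℝ, 0 ≤ C ∧ ∀ φ ψ : Euc n → ℂ, IsTest φ → IsTest ψ →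
      HNormE n α (conjExpE p) (fun x => φ x * ψ x) ≤
        C * HNorm n α p φ * HNormE n α (conjExpE p) ψ := by
  unfold conjExp at hpp hα
  have hp0 : 0 < p := by linarith
  have hp1' : 0 < p - 1 := by linarith
  have hnp : (n : ℝ) / p < α := by
    rw [div_lt_iff₀ hα0] at hpα
    rw [div_lt_iff₀ hp0]; linarith
  have hp2 : 2 < p := by
    have h2 : 2 ≤ p := by
      rw [div_le_iff₀ hp1'] at hpp
      nlinarith
    rcases h2.lt_or_eq with h | h
    · exact h
    · subst h
      norm_num at hα hnp
      linarith
  have hp2' : 0 < p - 2 := by linarith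
  have hr : 1 ≤ p / (p - 1) := by rw [le_div_iff₀ hp1']; linarith
  have hs : 1 ≤ p / (p - 2) := by rw [le_div_iff₀ hp2']; linarith
  have h1 : 1 / (p / (p - 2)) + 2 / p = 1 := by field_simp; ring
  have h2 : 1 / (p / (p - 1)) = 1 / (p / (p - 2)) + 1 / p := by field_simp; ring
  have hrp : (p / (p - 1)).HolderConjugate p :=
    (Real.HolderConjugate.conjExponent hp1).symm
  have hT : ENNReal.HolderTriple (ENNReal.ofReal p) (ENNReal.ofReal (p / (p - 2)))
      (ENNReal.ofReal (p / (p - 1))) := by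
    constructor
    rw [← ENNReal.ofReal_inv_of_pos hp0, ← ENNReal.ofReal_inv_of_pos (by linarith),
      ← ENNReal.ofReal_inv_of_pos (by linarith), ← ENNReal.ofReal_add (by positivity) (by positivity)]
    congr 1
    rw [← one_div, ← one_div, ← one_div, h2, add_comm]
  obtain ⟨C, hC⟩ := pe_final (n := n) hp1.le hr hs hrp h1 h2 hα0 hnp hT
  refine ⟨C, C.2, fun φ ψ hφ hψ => ?_⟩
  have hcE : conjExpE p = ENNReal.ofReal (p / (p - 1)) := if_neg (by linarith)
  let Φ := hφ.2.toSchwartzMap hφ.1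
  let Ψ := hψ.2.toSchwartzMap hψ.1
  have hΦ : (Φ : Euc n → ℂ) = φ := rfl
  have hΨ : (Ψ : Euc n → ℂ) = ψ := rfl
  have hM : (fun x => φ x * ψ x) = (peM Φ Ψ : Euc n → ℂ) := rfl
  have key := hC (peJ α Φ) (peJ α Ψ)
  rw [peJ_peJ, peJ_peJ, neg_add_cancel, peJ_zero, peJ_zero] at key
  have key2 := ENNReal.toReal_mono (ENNReal.mul_ne_top (ENNReal.mul_ne_top ENNReal.coe_ne_top
    (peN_fin _ _).ne) (peN_fin _ _).ne) key
  rw [ENNReal.toReal_mul, ENNReal.toReal_mul, ENNReal.coe_toReal] at key2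
  unfold HNorm HNormE
  rw [hcE, hM, ← hΦ, ← hΨ, ← peJ_coe, ← peJ_coe, ← peJ_coe]
  exact key2
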